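/- arXiv:0710.1178 — 2 statements merged into one kernel-verified Lean document; each statement's English description precedes it below -/
import Mathlib

section
/- Let $(A, \mathfrak{m})$ be a Cohen-Macaulay local ring of dimension $d > 0$ with infinite residue field, $I$ an $\mathfrak{m}$-primary ideal, $Q$ a minimal reduction of $I$, and suppose $e_1(I) = e_0(I) - \ell_A(A/I) + 1$ and $\ell_A(I^2/QI) = d$. Then $\ell_A(A/I^{n+1}) = e_0\binom{n+d}{d} - e_1\binom{n+d-1}{d-1}$ for all $n \geq 1$, and $e_i(I) = 0$ for all $2 \leq i \leq d$. -/
open IsLocalRing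

/-- A Noetherian local ring is Cohen–Macaulay of dimension `d` iff its Krull dimension
is `d` and there is a regular sequence of length `d` in the maximal ideal. -/
def IsCohenMacaulayLocal (A : Type*) [CommRing A] [IsLocalRing A] (d : ℕ) : Prop :=
  ringKrullDim A = d ∧
    ∃ rs : List A, rs.length = d ∧ (∀ x ∈ rs, x ∈ maximalIdeal A) ∧
      RingTheory.Sequence.IsRegular A rs

/-- `I` is primary to the maximal ideal (i.e. `𝔪`-primary). -/
def IsPrimaryToMax (A : Type*) [CommRing A] [IsLocalRing A] (I : Ideal A) : Prop :=
  I ≤ maximalIdeal A ∧ maximalIdeal A ≤ I.radical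

/-- The length of a module, as the Krull dimension of its submodule lattice. -/
noncomputable def moduleLength (A M : Type*) [CommRing A] [AddCommGroup M]
    [Module A M] : WithBot ℕ∞ :=
  Order.krullDim (Submodule A M)

/-- Multiplication by `x` is injective on `A ⧸ J`. -/
def NonzeroDivMod {A : Type*} [CommRing A] (J : Ideal A) (x : A) : Prop :=
  ∀ y, x * y ∈ J → y ∈ J

/-- There is a sequence of length `n` in the maximal ideal which is weakly regular
on `A ⧸ J`. -/
def DepthGE {A : Type*} [CommRing A] [IsLocalRing A] : ℕ → Ideal A → Prop
  | 0, _ => True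
  | n + 1, J => ∃ x ∈ maximalIdeal A, NonzeroDivMod J x ∧ DepthGE n (J ⊔ Ideal.span {x})

/-- The socle of `A ⧸ J` vanishes. -/
def SocleFree {A : Type*} [CommRing A] [IsLocalRing A] (J : Ideal A) : Prop :=
  ∀ z, (∀ r ∈ maximalIdeal A, r * z ∈ J) → z ∈ J

theorem mem_sup_span_singleton_iff {A : Type*} [CommRing A] {J : Ideal A} {x y : A} :
    y ∈ J ⊔ Ideal.span {x} ↔ ∃ j ∈ J, ∃ t, y = j + x * t := by
  rw [Submodule.mem_sup]
  constructor
  · rintro ⟨j, hj, z, hz, rfl⟩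
    obtain ⟨t, rfl⟩ := Ideal.mem_span_singleton.mp hz
    exact ⟨j, hj, t, rfl⟩
  · rintro ⟨j, hj, t, rfl⟩
    exact ⟨j, hj, x * t, Ideal.mem_span_singleton.mpr ⟨t, rfl⟩, rfl⟩

theorem NonzeroDivMod.swap {A : Type*} [CommRing A] {J : Ideal A} {x z : A}
    (hx : NonzeroDivMod J x) (hzx : NonzeroDivMod (J ⊔ Ideal.span {x}) z) :
    NonzeroDivMod (J ⊔ Ideal.span {z}) x := by
  intro y hy
  obtain ⟨j, hj, t, ht⟩ := mem_sup_span_singleton_iff.mp hy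
  have h1 : z * t ∈ J ⊔ Ideal.span {x} :=
    mem_sup_span_singleton_iff.mpr ⟨-j, J.neg_mem hj, y, by linear_combination -ht⟩
  obtain ⟨j', hj', s, hs⟩ := mem_sup_span_singleton_iff.mp (hzx _ h1)
  have h2 : x * (y - z * s) ∈ J := by
    have : x * (y - z * s) = j + z * j' := by rw [hs] at ht; linear_combination ht
    rw [this]
    exact J.add_mem hj (J.mul_mem_left _ hj')
  exact mem_sup_span_singleton_iff.mpr ⟨_, hx _ h2, s, by ring⟩

theorem NonzeroDivMod.socleFree {A : Type*} [CommRing A] [IsLocalRing A] {J : Ideal A} {x : A}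
    (hxm : x ∈ maximalIdeal A) (hx : NonzeroDivMod J x) : SocleFree J :=
  fun z hz => hx z (hz x hxm)

theorem SocleFree.exchange {A : Type*} [CommRing A] [IsLocalRing A] {J : Ideal A} {x a : A}
    (hxm : x ∈ maximalIdeal A) (hx : NonzeroDivMod J x) (ha : NonzeroDivMod J a)
    (h : SocleFree (J ⊔ Ideal.span {x})) : SocleFree (J ⊔ Ideal.span {a}) := by
  intro z hz
  obtain ⟨j, hj, w, hw⟩ := mem_sup_span_singleton_iff.mp (hz x hxm)
  have hwx : w ∈ J ⊔ Ideal.span {x} := by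
    refine h w fun r hr => ?_
    obtain ⟨j1, hj1, t, ht⟩ := mem_sup_span_singleton_iff.mp (hz r hr)
    have h1 : a * (r * w - x * t) ∈ J := by
      have : a * (r * w - x * t) = x * j1 - r * j := by linear_combination x * ht - r * hw
      rw [this]
      exact J.sub_mem (J.mul_mem_left _ hj1) (J.mul_mem_left _ hj)
    exact mem_sup_span_singleton_iff.mpr ⟨_, ha _ h1, t, by ring⟩
  obtain ⟨j2, hj2, s, hs⟩ := mem_sup_span_singleton_iff.mp hwx
  have h2 : x * (z - a * s) ∈ J := by
    have : x * (z - a * s) = j + a * j2 := by rw [hs] at hw; linear_combination hw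
    rw [this]
    exact J.add_mem hj (J.mul_mem_left _ hj2)
  exact mem_sup_span_singleton_iff.mpr ⟨_, hx _ h2, s, by ring⟩

theorem mem_colon_bot_mk_iff {A : Type*} [CommRing A] {J : Ideal A} {y r : A} :
    r ∈ (⊥ : Submodule A (A ⧸ J)).colon {Submodule.Quotient.mk y} ↔ r * y ∈ J := by
  rw [Submodule.mem_colon_singleton, Submodule.mem_bot, ← Submodule.Quotient.mk_smul,
    Submodule.Quotient.mk_eq_zero, smul_eq_mul]

theorem exists_prime_colon {A : Type*} [CommRing A] [IsNoetherianRing A] {J : Ideal A} {u : A}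
    (hu : u ∉ J) : ∃ p : Ideal A, p.IsPrime ∧ (∃ y, ∀ r, r ∈ p ↔ r * y ∈ J) ∧
      ∀ r, r * u ∈ J → r ∈ p := by
  obtain ⟨p, hp, hle⟩ := exists_le_isAssociatedPrime_of_isNoetherianRing A
    (Submodule.Quotient.mk u : A ⧸ J) (by rwa [ne_eq, Submodule.Quotient.mk_eq_zero])
  obtain ⟨hpp, y, rfl⟩ := isAssociatedPrime_iff.mp hp
  obtain ⟨y, rfl⟩ := Submodule.Quotient.mk_surjective _ y
  exact ⟨_, hpp, ⟨y, fun r => mem_colon_bot_mk_iff⟩, fun r hr => hle (mem_colon_bot_mk_iff.mpr hr)⟩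

theorem exists_nonzeroDivMod {A : Type*} [CommRing A] [IsLocalRing A] [IsNoetherianRing A]
    (T : Set (Ideal A)) (hT : T.Finite) (h : ∀ J ∈ T, SocleFree J) :
    ∃ x ∈ maximalIdeal A, ∀ J ∈ T, NonzeroDivMod J x := by
  by_contra! hcon
  have hfin : (⋃ J ∈ T, associatedPrimes A (A ⧸ J)).Finite :=
    hT.biUnion fun J _ => associatedPrimes.finite A (A ⧸ J)
  obtain ⟨p, hp, hmp⟩ := (Ideal.subset_union_prime_finite hfin (f := id) ⊥ ⊥
    (I := maximalIdeal A) (by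
      intro p hp _ _
      obtain ⟨J, _, hp⟩ := Set.mem_iUnion₂.mp hp
      exact hp.1)).mp (by
      intro x hx
      obtain ⟨J, hJ, hxJ⟩ := hcon x hx
      simp only [NonzeroDivMod, not_forall] at hxJ
      obtain ⟨y, hxy, hy⟩ := hxJ
      have := (biUnion_associatedPrimes_eq_zero_divisors A (A ⧸ J)).ge
        (show x ∈ _ from ⟨Submodule.Quotient.mk y, by
          rwa [ne_eq, Submodule.Quotient.mk_eq_zero], by
          rwa [← Submodule.Quotient.mk_smul, Submodule.Quotient.mk_eq_zero]⟩)
      obtain ⟨p, hp, hxp⟩ := Set.mem_iUnion₂.mp this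
      exact Set.mem_iUnion₂.mpr ⟨p, Set.mem_iUnion₂.mpr ⟨J, hJ, hp⟩, hxp⟩)
  obtain ⟨J, hJ, hp⟩ := Set.mem_iUnion₂.mp hp
  obtain ⟨hpp, y, rfl⟩ := isAssociatedPrime_iff.mp hp
  obtain ⟨y, rfl⟩ := Submodule.Quotient.mk_surjective _ y
  have hy : y ∈ J := h J hJ y fun r hr => mem_colon_bot_mk_iff.mp (hmp hr)
  exact hpp.ne_top ((Ideal.eq_top_iff_one _).mpr (mem_colon_bot_mk_iff.mpr (by simpa using hy)))

theorem DepthGE.sup_span_singleton {A : Type*} [CommRing A] [IsLocalRing A] [IsNoetherianRing A]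
    (n : ℕ) : ∀ {J : Ideal A} {a : A}, DepthGE (n + 1) J → a ∈ maximalIdeal A →
      NonzeroDivMod J a → DepthGE n (J ⊔ Ideal.span {a}) := by
  induction n with
  | zero => intros; trivial
  | succ n ih =>
    rintro J a ⟨x, hxm, hx, hJx⟩ ham ha
    obtain ⟨x', hxm', hx', -⟩ := id hJx
    have hsx : SocleFree (J ⊔ Ideal.span {x}) := hx'.socleFree hxm'
    obtain ⟨z, hzm, hz⟩ := exists_nonzeroDivMod
      {J, J ⊔ Ideal.span {x}, J ⊔ Ideal.span {a}} (by simp) (by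
        rintro K (rfl | rfl | rfl)
        · exact ha.socleFree ham
        · exact hsx
        · exact hsx.exchange hxm hx ha)
    have hz0 := hz J (by simp)
    have hzx := hz (J ⊔ Ideal.span {x}) (by simp)
    have hza := hz (J ⊔ Ideal.span {a}) (by simp)
    refine ⟨z, hzm, hza, ?_⟩
    rw [sup_right_comm]
    refine ih ⟨x, hxm, hx.swap hzx, ?_⟩ ham (ha.swap hza)
    rw [sup_right_comm]
    exact ih hJx hzm hzx

theorem DepthGE.le_ringKrullDim_quotient {A : Type*} [CommRing A] [IsLocalRing A]
    [IsNoetherianRing A] (n : ℕ) : ∀ {J : Ideal A} (_ : DepthGE n J) (p : Ideal A) [p.IsPrime]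
      (y : A) (_ : ∀ r, r ∈ p ↔ r * y ∈ J), (n : WithBot ℕ∞) ≤ ringKrullDim (A ⧸ p) := by
  induction n with
  | zero => intro J _ p _ y _; simpa using ringKrullDim_nonneg_of_nontrivial
  | succ n ih =>
    rintro J ⟨x, hxm, hx, hJx⟩ p hp y hy
    have hyJ : y ∉ J := fun h => hp.ne_top
      ((Ideal.eq_top_iff_one _).mpr ((hy 1).mpr (by simpa using h)))
    have hxp : x ∉ p := fun h => hyJ (hx _ ((hy x).mp h))
    let N : Ideal A :=
      { carrier := {z | ∀ r ∈ p, r * z ∈ J}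
        add_mem' := fun {a b} ha hb r hr => by
          rw [mul_add]; exact J.add_mem (ha r hr) (hb r hr)
        zero_mem' := fun r _ => by simp
        smul_mem' := fun c a ha r hr => by
          rw [smul_eq_mul, mul_left_comm]; exact J.mul_mem_left _ (ha r hr) }
    have hN : ¬ N ≤ J ⊔ Ideal.span {x} := by
      intro hle
      have : N ≤ J := by
        refine Submodule.le_of_le_smul_of_le_jacobson_bot (I := maximalIdeal A)
          (IsNoetherian.noetherian N) (maximalIdeal_le_jacobson _) fun z hz => ?_
        obtain ⟨j, hj, t, rfl⟩ := mem_sup_span_singleton_iff.mp (hle hz)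
        have ht : t ∈ N := fun r hr => hx _ (by
          have h1 := J.sub_mem (hz r hr) (J.mul_mem_left r hj)
          have h2 : r * (j + x * t) - r * j = x * (r * t) := by ring
          rwa [h2] at h1)
        exact Submodule.add_mem_sup hj (Submodule.smul_mem_smul hxm ht)
      exact hyJ (this fun r hr => (hy r).mp hr)
    obtain ⟨u, huN, hu⟩ := Set.not_subset.mp hN
    obtain ⟨q, hq, ⟨v, hv⟩, hqu⟩ := exists_prime_colon hu
    have hpq : p ≤ q := fun r hr => hqu r (Ideal.mem_sup_left (huN r hr))
    have hxq : x ∈ q := hqu x (Ideal.mem_sup_right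
      (Ideal.mul_mem_right _ _ (Ideal.mem_span_singleton_self x)))
    have h1 := ih hJx q v hv
    have h2 := ringKrullDim_succ_le_of_surjective (Ideal.Quotient.factor hpq)
      (Ideal.Quotient.factor_surjective hpq) (r := Ideal.Quotient.mk p x)
      (mem_nonZeroDivisors_of_ne_zero (by rwa [ne_eq, Ideal.Quotient.eq_zero_iff_mem]))
      (by simpa [Ideal.Quotient.eq_zero_iff_mem] using hxq)
    push_cast
    exact (add_le_add_left h1 1).trans h2

theorem DepthGE.nonzeroDivMod {A : Type*} [CommRing A] [IsLocalRing A] [IsNoetherianRing A]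
    {J : Ideal A} {b : A} {l : List A} (hJ : DepthGE (l.length + 1) J)
    (hbm : b ∈ maximalIdeal A) (hlm : ∀ x ∈ l, x ∈ maximalIdeal A)
    {N : ℕ} (hN : maximalIdeal A ^ N ≤ J ⊔ Ideal.ofList (b :: l)) : NonzeroDivMod J b := by
  intro u hu
  by_contra huJ
  obtain ⟨p, hp, ⟨y, hy⟩, hpu⟩ := exists_prime_colon huJ
  have h1 := hJ.le_ringKrullDim_quotient _ p y hy
  have hyJ : y ∉ J := fun h => hp.ne_top
    ((Ideal.eq_top_iff_one _).mpr ((hy 1).mpr (by simpa using h)))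
  have hJp : J ≤ p := fun r hr => (hy r).mpr (J.mul_mem_right _ hr)
  have hbp : b ∈ p := hpu b hu
  have hpm : p ≤ maximalIdeal A := le_maximalIdeal hp.ne_top
  classical
  have := IsLocalRing.of_surjective' (Ideal.Quotient.mk p) Ideal.Quotient.mk_surjective
  have hmap : ∀ x ∈ maximalIdeal A, Ideal.Quotient.mk p x ∈ maximalIdeal (A ⧸ p) := by
    intro x hx
    have := IsLocalHom.of_surjective (Ideal.Quotient.mk p) Ideal.Quotient.mk_surjective
    rw [mem_maximalIdeal, mem_nonunits_iff] at hx ⊢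
    exact fun h => hx (isUnit_of_map_unit _ _ h)
  set s : Finset (A ⧸ p) := (l.map (Ideal.Quotient.mk p)).toFinset with hs
  have h2 := ringKrullDim_le_ringKrullDim_quotient_add_card s (by
    rw [IsLocalRing.ringJacobson_eq_maximalIdeal]
    intro x hx
    simp only [hs, Finset.mem_coe, List.mem_toFinset, List.mem_map] at hx
    obtain ⟨x, hx, rfl⟩ := hx
    exact hmap x (hlm x hx))
  let φ : A →+* (A ⧸ p) ⧸ Ideal.span (s : Set (A ⧸ p)) :=
    (Ideal.Quotient.mk _).comp (Ideal.Quotient.mk p)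
  have hφ : Function.Surjective φ :=
    Ideal.Quotient.mk_surjective.comp Ideal.Quotient.mk_surjective
  have hker : J ⊔ Ideal.ofList (b :: l) ≤ RingHom.ker φ := by
    have hp' : p ≤ RingHom.ker φ := fun r hr => by
      simp [φ, RingHom.mem_ker, Ideal.Quotient.eq_zero_iff_mem.mpr hr]
    refine sup_le (hJp.trans hp') (Ideal.span_le.mpr ?_)
    intro r hr
    rcases List.mem_cons.mp hr with rfl | hr
    · exact hp' hbp
    · refine Ideal.Quotient.eq_zero_iff_mem.mpr (Ideal.subset_span ?_)
      simp only [hs, Finset.mem_coe, List.mem_toFinset, List.mem_map]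
      exact ⟨r, hr, rfl⟩
  have h3 : Ring.KrullDimLE 0 ((A ⧸ p) ⧸ Ideal.span (s : Set (A ⧸ p))) := by
    rw [Ring.krullDimLE_zero_iff]
    intro P hP
    have hle : maximalIdeal A ≤ P.comap φ := by
      refine Ideal.IsPrime.le_of_pow_le (n := N) (hN.trans (hker.trans ?_))
      exact Ideal.ker_le_comap φ
    have hm : (P.comap φ).IsMaximal :=
      (hle.antisymm (le_maximalIdeal (Ideal.comap_ne_top _ hP.ne_top))) ▸ maximalIdeal.isMaximal A
    exact Ideal.isMaximal_of_isIntegral_of_isMaximal_comap' φ (φ.isIntegral_of_surjective hφ) P hm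
  have h4 : s.card ≤ l.length := (List.toFinset_card_le _).trans (by simp)
  have h5 := (Ring.krullDimLE_iff.mp h3)
  have h6 : ((l.length + 1 : ℕ) : WithBot ℕ∞) ≤ (l.length : ℕ) := by
    refine h1.trans (h2.trans ((add_le_add_left h5 _).trans ?_))
    simpa using h4
  have h7 : l.length + 1 ≤ l.length := by exact_mod_cast h6
  omega

theorem ofList_eq_sup {A : Type*} [CommRing A] (x : A) (l : List A) :
    Ideal.ofList (x :: l) = Ideal.ofList l ⊔ Ideal.span {x} := by
  rw [Ideal.ofList_cons, sup_comm]

/-- `l` is a weakly regular sequence when read from right to left. -/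
def RevRegular {A : Type*} [CommRing A] : List A → Prop
  | [] => True
  | x :: l => RevRegular l ∧ NonzeroDivMod (Ideal.ofList l) x

theorem DepthGE.sup_ofList {A : Type*} [CommRing A] [IsLocalRing A] [IsNoetherianRing A]
    {N : ℕ} {l' : List A} (hl' : ∀ x ∈ l', x ∈ maximalIdeal A) :
    ∀ {l : List A} {J : Ideal A}, DepthGE (l.length + l'.length) J →
      (∀ x ∈ l, x ∈ maximalIdeal A) → maximalIdeal A ^ N ≤ J ⊔ Ideal.ofList (l ++ l') →
      DepthGE l'.length (J ⊔ Ideal.ofList l)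
  | [], J, h, _, _ => by simpa using h
  | b :: l, J, h, hm, hN => by
    have hlen : (b :: l).length + l'.length = (l ++ l').length + 1 := by
      simp; omega
    rw [hlen] at h
    have hb : NonzeroDivMod J b := h.nonzeroDivMod (hm b (by simp)) (by
      intro x hx
      rcases List.mem_append.mp hx with hx | hx
      · exact hm x (by simp [hx])
      · exact hl' x hx) (by simpa using hN)
    have h2 := h.sup_span_singleton _ (hm b (by simp)) hb
    rw [List.length_append] at h2
    have h3 := DepthGE.sup_ofList hl' h2 (fun x hx => hm x (by simp [hx])) (N := N) (by
      rwa [sup_assoc, ← Ideal.ofList_cons, ← List.cons_append])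
    rwa [Ideal.ofList_cons, ← sup_assoc]

theorem DepthGE.revRegular {A : Type*} [CommRing A] [IsLocalRing A] [IsNoetherianRing A]
    {N : ℕ} : ∀ {l pre : List A}, DepthGE (pre ++ l).length (⊥ : Ideal A) →
      (∀ x ∈ pre ++ l, x ∈ maximalIdeal A) → maximalIdeal A ^ N ≤ Ideal.ofList (pre ++ l) →
      RevRegular l
  | [], _, _, _, _ => trivial
  | x :: l, pre, h, hm, hN => by
    refine ⟨DepthGE.revRegular (pre := pre ++ [x]) (by simpa using h) (by simpa using hm)
      (N := N) (by simpa using hN), ?_⟩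
    have hpre : ∀ y ∈ pre, y ∈ maximalIdeal A := fun y hy => hm y (by simp [hy])
    have hx : x ∈ maximalIdeal A := hm x (by simp)
    have key : Ideal.ofList (pre ++ x :: l) ≤ Ideal.ofList (l ++ x :: pre) := by
      simp only [Ideal.ofList_append, Ideal.ofList_cons]
      exact sup_le (le_sup_of_le_right le_sup_right)
        (sup_le (le_sup_of_le_right le_sup_left) le_sup_left)
    have h2 := DepthGE.sup_ofList (l' := x :: pre) (N := N) (l := l) (J := ⊥)
      (by simpa using ⟨hx, hpre⟩)
      (by
        have : (pre ++ x :: l).length = l.length + (x :: pre).length := by simp; omega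
        rwa [this] at h)
      (fun y hy => hm y (by simp [hy])) (by simpa using hN.trans key)
    rw [bot_sup_eq] at h2
    refine h2.nonzeroDivMod (N := N) hx hpre (hN.trans ?_)
    simp only [Ideal.ofList_append, Ideal.ofList_cons]
    exact sup_le (le_sup_of_le_right le_sup_right)
        (sup_le (le_sup_of_le_right le_sup_left) le_sup_left)

theorem depthGE_of_isWeaklyRegular {A : Type*} [CommRing A] [IsLocalRing A] {rs : List A}
    (hm : ∀ x ∈ rs, x ∈ maximalIdeal A) (h : RingTheory.Sequence.IsWeaklyRegular A rs) (k : ℕ) :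
    k ≤ rs.length → DepthGE k (Ideal.ofList (rs.take (rs.length - k))) := by
  induction k with
  | zero => intro _; trivial
  | succ k ih =>
    intro hk
    have hi : rs.length - (k + 1) < rs.length := by omega
    refine ⟨rs[rs.length - (k + 1)], hm _ (List.getElem_mem hi), ?_, ?_⟩
    · have h1 := h.regular_mod_prev _ hi
      intro y hy
      have h2 : (Submodule.Quotient.mk y : A ⧸ (Ideal.ofList (rs.take (rs.length - (k + 1))) •
          (⊤ : Submodule A A))) = 0 := by
        apply h1
        simp only [smul_zero, ← Submodule.Quotient.mk_smul]
        rw [Submodule.Quotient.mk_eq_zero]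
        simpa using hy
      rw [Submodule.Quotient.mk_eq_zero] at h2
      simpa using h2
    · have h1 := ih (by omega)
      have h2 : rs.length - k = rs.length - (k + 1) + 1 := by omega
      rw [h2, List.take_succ_eq_append_getElem hi, Ideal.ofList_append,
        Ideal.ofList_singleton] at h1
      exact h1

theorem sup_span_pow_succ {A : Type*} [CommRing A] (J : Ideal A) (x : A) (n : ℕ) :
    (J ⊔ Ideal.span {x}) ^ (n + 1) =
      J ^ (n + 1) ⊔ Ideal.span {x} * (J ⊔ Ideal.span {x}) ^ n := by
  have hJ : J ≤ J ⊔ Ideal.span {x} := le_sup_left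
  have hx : Ideal.span {x} ≤ J ⊔ Ideal.span {x} := le_sup_right
  induction n with
  | zero => simp
  | succ n ih =>
    refine le_antisymm ?_ (sup_le (Ideal.pow_right_mono hJ _) ?_)
    · rw [pow_succ' _ (n + 1), Ideal.sup_mul]
      refine sup_le ?_ le_sup_right
      rw [ih, Ideal.mul_sup, ← pow_succ']
      refine sup_le le_sup_left (le_sup_of_le_right ?_)
      rw [mul_left_comm, ← ih, pow_succ']
      exact Ideal.mul_mono_right (Ideal.mul_mono_left hJ)
    · rw [pow_succ' _ (n + 1)]
      exact Ideal.mul_mono_left hx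

theorem sup_span_pow_succ_mul {A : Type*} [CommRing A] (J U : Ideal A) (x : A) (n : ℕ) :
    (J ⊔ Ideal.span {x}) ^ (n + 1) * U =
      J ^ (n + 1) * U ⊔ Ideal.span {x} * ((J ⊔ Ideal.span {x}) ^ n * U) := by
  rw [sup_span_pow_succ, Ideal.sup_mul, mul_assoc]

theorem mem_sup_span_mul_iff {A : Type*} [CommRing A] {U V : Ideal A} {x w : A} :
    w ∈ U ⊔ Ideal.span {x} * V ↔ ∃ u ∈ U, ∃ v ∈ V, w = u + x * v := by
  rw [Submodule.mem_sup]
  constructor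
  · rintro ⟨u, hu, z, hz, rfl⟩
    obtain ⟨v, hv, rfl⟩ := Ideal.mem_span_singleton_mul.mp hz
    exact ⟨u, hu, v, hv, rfl⟩
  · rintro ⟨u, hu, v, hv, rfl⟩
    exact ⟨u, hu, _, Ideal.mem_span_singleton_mul.mpr ⟨v, hv, rfl⟩, rfl⟩

theorem nonzeroDivMod_pow_of_forall {A : Type*} [CommRing A] {J : Ideal A} {x : A}
    (h : ∀ n, ∀ w ∈ J ^ n, x * w ∈ J ^ n * J → w ∈ J ^ n * J) (n : ℕ) :
    NonzeroDivMod (J ^ n) x := by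
  induction n with
  | zero => intro y _; simp
  | succ n ih =>
    intro y hy
    rw [pow_succ] at hy ⊢
    exact h n y (ih y (Ideal.mul_le_left hy)) hy

theorem RevRegular.mem_pow_mul {A : Type*} [CommRing A] : ∀ {l : List A}, RevRegular l →
    ∀ {K : Ideal A}, Ideal.ofList l ≤ K → ∀ {x : A}, NonzeroDivMod K x → ∀ n : ℕ,
      ∀ w ∈ Ideal.ofList l ^ n, x * w ∈ Ideal.ofList l ^ n * K → w ∈ Ideal.ofList l ^ n * K
  | [], _, K, _, x, hx, n, w, hw, hxw => by
    cases n with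
    | zero => simp only [pow_zero, Ideal.one_eq_top, Ideal.top_mul] at hxw ⊢; exact hx w hxw
    | succ n =>
      have h0 : w = 0 := by simpa [Ideal.ofList_nil, pow_succ] using hw
      rw [h0]; exact zero_mem _
  | y :: l, ⟨hl, hy⟩, K, hK, x, hx, n, w, hw, hxw => by
    rw [ofList_eq_sup] at hK hw hxw ⊢
    have hJQ : Ideal.ofList l ≤ Ideal.ofList l ⊔ Ideal.span {y} := le_sup_left
    have hJK : Ideal.ofList l ≤ K := hJQ.trans hK
    have hyK : y ∈ K := hK (Ideal.mem_sup_right (Ideal.mem_span_singleton_self y))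
    have hpow := nonzeroDivMod_pow_of_forall fun n w => hl.mem_pow_mul le_rfl hy n w
    induction n generalizing w with
    | zero => simp only [pow_zero, Ideal.one_eq_top, Ideal.top_mul] at hxw ⊢; exact hx w hxw
    | succ n ih =>
      rw [sup_span_pow_succ] at hw
      obtain ⟨w1, hw1, w2, hw2, rfl⟩ := mem_sup_span_mul_iff.mp hw
      rw [sup_span_pow_succ_mul] at hxw
      obtain ⟨α, hα, β, hβ, h⟩ := mem_sup_span_mul_iff.mp hxw
      have h1 : x * w2 - β ∈ Ideal.ofList l ^ (n + 1) := by
        refine hpow (n + 1) _ ?_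
        have : y * (x * w2 - β) = α - x * w1 := by linear_combination h
        rw [this]
        exact Ideal.sub_mem _ (Ideal.mul_le_left hα) (Ideal.mul_mem_left _ _ hw1)
      have h2 : w2 ∈ (Ideal.ofList l ⊔ Ideal.span {y}) ^ n * K := by
        refine ih w2 hw2 ?_
        have : x * w2 = (x * w2 - β) + β := by ring
        rw [this]
        refine Ideal.add_mem _ ?_ hβ
        rw [pow_succ] at h1
        exact Ideal.mul_mono (Ideal.pow_right_mono hJQ _) hJK h1
      have h3 : w1 ∈ Ideal.ofList l ^ (n + 1) * K := by
        refine hl.mem_pow_mul hJK hx _ _ hw1 ?_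
        have : x * w1 = α - (x * w2 - β) * y := by linear_combination h
        rw [this]
        exact Ideal.sub_mem _ hα (Ideal.mul_mem_mul h1 hyK)
      rw [sup_span_pow_succ_mul]
      exact mem_sup_span_mul_iff.mpr ⟨w1, h3, w2, h2, rfl⟩

theorem RevRegular.nonzeroDivMod_pow {A : Type*} [CommRing A] {l : List A} {x : A}
    (h : RevRegular (x :: l)) (n : ℕ) : NonzeroDivMod (Ideal.ofList l ^ n) x :=
  nonzeroDivMod_pow_of_forall (fun n w => h.1.mem_pow_mul le_rfl h.2 n w) n

theorem RevRegular.mem_of_mul_mem {A : Type*} [CommRing A] {l : List A} {x : A}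
    (h : RevRegular (x :: l)) {K : Ideal A} (hK : Ideal.ofList (x :: l) ≤ K) {n : ℕ} {w : A}
    (hw : x * w ∈ Ideal.ofList (x :: l) ^ (n + 1) * K) : w ∈ Ideal.ofList (x :: l) ^ n * K := by
  rw [ofList_eq_sup] at hK hw ⊢
  rw [sup_span_pow_succ_mul] at hw
  obtain ⟨α, hα, β, hβ, hw⟩ := mem_sup_span_mul_iff.mp hw
  have h1 : w - β ∈ Ideal.ofList l ^ (n + 1) := by
    refine h.nonzeroDivMod_pow _ _ ?_
    have : x * (w - β) = α := by linear_combination hw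
    rw [this]
    exact Ideal.mul_le_left hα
  rw [pow_succ] at h1
  have hJQ : Ideal.ofList l ≤ Ideal.ofList l ⊔ Ideal.span {x} := le_sup_left
  have h2 := Ideal.mul_mono (Ideal.pow_right_mono hJQ n) (hJQ.trans hK) h1
  rw [← sub_add_cancel w β]
  exact Ideal.add_mem _ h2 hβ

theorem RevRegular.inf_le {A : Type*} [CommRing A] {l : List A} {x : A}
    (h : RevRegular (x :: l)) {K : Ideal A} (hK : Ideal.ofList (x :: l) ≤ K) {n : ℕ} {w : A}
    (hw : w ∈ Ideal.ofList l ^ (n + 1))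
    (hw' : w ∈ Ideal.ofList (x :: l) ^ (n + 1) * K ⊔
      Ideal.span {x} * Ideal.ofList (x :: l) ^ n) : w ∈ Ideal.ofList l ^ (n + 1) * K := by
  have hxK : x ∈ K := hK (Ideal.subset_span (by simp))
  rw [ofList_eq_sup, sup_span_pow_succ_mul, sup_assoc, ← Ideal.mul_sup] at hw'
  obtain ⟨α, hα, β, -, rfl⟩ := mem_sup_span_mul_iff.mp hw'
  have h1 : β ∈ Ideal.ofList l ^ (n + 1) := by
    refine h.nonzeroDivMod_pow _ _ ?_
    rw [← add_sub_cancel_left α (x * β)]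
    exact Ideal.sub_mem _ hw (Ideal.mul_le_left hα)
  refine Ideal.add_mem _ hα ?_
  rw [mul_comm x]
  exact Ideal.mul_mem_mul h1 hxK

/-- The length of `V ⧸ (U ⊓ V)`. -/
noncomputable def relLength {A : Type*} [CommRing A] (U V : Ideal A) : ℕ∞ :=
  Module.length A (V ⧸ Submodule.comap V.subtype U)

theorem relLength_le_of_surjective {A : Type*} [CommRing A] {U V W W' : Ideal A} (f : A →ₗ[A] A)
    (hV : ∀ v ∈ V, f v ∈ W') (hU : ∀ v ∈ V, v ∈ U → f v ∈ W)
    (h : ∀ y ∈ W', ∃ w ∈ W, ∃ v ∈ V, y = w + f v) : relLength W W' ≤ relLength U V := by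
  refine Module.length_le_of_surjective
    (Submodule.mapQ (Submodule.comap V.subtype U) (Submodule.comap W'.subtype W) (f.restrict hV)
      fun v hv => hU v v.2 hv) ?_
  intro y
  obtain ⟨⟨y, hy⟩, rfl⟩ := Submodule.Quotient.mk_surjective _ y
  obtain ⟨w, hw, v, hv, rfl⟩ := h y hy
  refine ⟨Submodule.Quotient.mk ⟨v, hv⟩, ?_⟩
  refine (Submodule.Quotient.eq _ (x := f.restrict hV ⟨v, hv⟩)).mpr ?_
  change f v - (w + f v) ∈ W
  simpa using hw

theorem relLength_le_of_injective {A : Type*} [CommRing A] {U V W W' : Ideal A} (f : A →ₗ[A] A)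
    (hV : ∀ v ∈ V, f v ∈ W') (hU : ∀ v ∈ V, f v ∈ W → v ∈ U) :
    relLength U V ≤ relLength W W' := by
  have h1 : relLength U V ≤ relLength (Submodule.comap f W) V :=
    relLength_le_of_surjective LinearMap.id (fun v hv => hv) (fun v hv h => hU v hv h)
      fun y hy => ⟨0, zero_mem _, y, hy, by simp⟩
  refine h1.trans (Module.length_le_of_injective
    (Submodule.mapQ (Submodule.comap V.subtype (Submodule.comap f W))
      (Submodule.comap W'.subtype W) (f.restrict hV)
      fun v hv => hv) ?_)
  rw [← LinearMap.ker_eq_bot, eq_bot_iff]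
  intro y hy
  obtain ⟨y, rfl⟩ := Submodule.Quotient.mk_surjective _ y
  exact (Submodule.Quotient.mk_eq_zero _).mpr
    ((Submodule.Quotient.mk_eq_zero _ (x := f.restrict hV y)).mp hy)

theorem relLength_anti_left {A : Type*} [CommRing A] {U U' : Ideal A} (V : Ideal A)
    (h : U ≤ U') : relLength U' V ≤ relLength U V :=
  relLength_le_of_surjective LinearMap.id (fun _ hv => hv) (fun _ _ hv => h hv)
    fun y hy => ⟨0, zero_mem _, y, hy, by simp⟩

theorem relLength_mono_right {A : Type*} [CommRing A] (U : Ideal A) {V V' : Ideal A}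
    (h : V ≤ V') : relLength U V ≤ relLength U V' :=
  relLength_le_of_injective LinearMap.id (fun _ hv => h hv) (fun _ _ hv => hv)

theorem relLength_sup_right {A : Type*} [CommRing A] (U V : Ideal A) :
    relLength U (U ⊔ V) = relLength U V := by
  refine le_antisymm ?_ (relLength_mono_right _ le_sup_right)
  refine relLength_le_of_surjective LinearMap.id (fun v hv => Ideal.mem_sup_right hv)
    (fun _ _ h => h) fun y hy => ?_
  obtain ⟨u, hu, v, hv, rfl⟩ := Submodule.mem_sup.mp hy
  exact ⟨u, hu, v, hv, rfl⟩

theorem relLength_eq_zero_iff {A : Type*} [CommRing A] {U V : Ideal A} :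
    relLength U V = 0 ↔ V ≤ U := by
  rw [relLength, Module.length_eq_zero_iff, Submodule.Quotient.subsingleton_iff,
    Submodule.comap_subtype_eq_top]

theorem one_le_relLength_iff {A : Type*} [CommRing A] {U V : Ideal A} :
    1 ≤ relLength U V ↔ ¬ V ≤ U := by
  rw [← relLength_eq_zero_iff, Order.one_le_iff_pos, pos_iff_ne_zero]

theorem relLength_eq_add {A : Type*} [CommRing A] {U P : Ideal A} (V : Ideal A) (h : U ≤ P) :
    relLength U V = relLength U (V ⊓ P) + relLength P V := by
  let f : (↥(V ⊓ P) ⧸ Submodule.comap (V ⊓ P).subtype U) →ₗ[A] (V ⧸ Submodule.comap V.subtype U) :=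
    Submodule.mapQ _ _ (Submodule.inclusion inf_le_left) fun v hv => hv
  let g : (V ⧸ Submodule.comap V.subtype U) →ₗ[A] (V ⧸ Submodule.comap V.subtype P) :=
    Submodule.mapQ _ _ LinearMap.id fun v hv => h hv
  refine Module.length_eq_add_of_exact f g ?_ ?_ ?_
  · rw [← LinearMap.ker_eq_bot, eq_bot_iff]
    intro y hy
    obtain ⟨y, rfl⟩ := Submodule.Quotient.mk_surjective _ y
    exact (Submodule.Quotient.mk_eq_zero _).mpr ((Submodule.Quotient.mk_eq_zero _
      (x := Submodule.inclusion (inf_le_left : V ⊓ P ≤ V) y)).mp hy)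
  · intro y
    obtain ⟨y, rfl⟩ := Submodule.Quotient.mk_surjective _ y
    exact ⟨Submodule.Quotient.mk y, rfl⟩
  · intro y
    obtain ⟨y, rfl⟩ := Submodule.Quotient.mk_surjective _ y
    refine (Submodule.Quotient.mk_eq_zero (Submodule.comap V.subtype P)).trans ?_
    constructor
    · intro hy
      exact ⟨Submodule.Quotient.mk ⟨y, y.2, hy⟩, rfl⟩
    · rintro ⟨z, hz⟩
      obtain ⟨z, rfl⟩ := Submodule.Quotient.mk_surjective _ z
      have h1 : (z : A) - y ∈ U := (Submodule.Quotient.eq _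
        (x := Submodule.inclusion (inf_le_left : V ⊓ P ≤ V) z)).mp hz
      change (y : A) ∈ P
      rw [← sub_sub_self (z : A) y]
      exact P.sub_mem z.2.2 (h h1)

theorem relLength_add {A : Type*} [CommRing A] {U V W : Ideal A} (hUV : U ≤ V) (hVW : V ≤ W) :
    relLength U W = relLength U V + relLength V W := by
  rw [relLength_eq_add W hUV, inf_eq_right.mpr hVW]

theorem relLength_top {A : Type*} [CommRing A] (J : Ideal A) :
    relLength J ⊤ = Module.length A (A ⧸ J) :=
  LinearEquiv.length_eq (Submodule.Quotient.equiv (Submodule.comap (⊤ : Ideal A).subtype J) J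
    Submodule.topEquiv (by ext; simp))

theorem relLength_maximalIdeal_top (A : Type*) [CommRing A] [IsLocalRing A] :
    relLength (maximalIdeal A) ⊤ = 1 := by
  rw [relLength_top, Module.length_eq_one_iff, isSimpleModule_iff_isCoatom]
  exact (maximalIdeal.isMaximal A).out

theorem relLength_sup_span_singleton {A : Type*} [CommRing A] [IsLocalRing A] {K : Ideal A} {y : A}
    (hy : y ∉ K) (hmy : ∀ r ∈ maximalIdeal A, r * y ∈ K) :
    relLength K (K ⊔ Ideal.span {y}) = 1 := by
  refine le_antisymm ?_ (one_le_relLength_iff.mpr fun h =>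
    hy (h (Ideal.mem_sup_right (Ideal.mem_span_singleton_self y))))
  rw [relLength_sup_right, ← relLength_maximalIdeal_top A]
  refine relLength_le_of_surjective (LinearMap.toSpanSingleton A A y) (fun v _ => ?_)
    (fun v _ hv => ?_)
    fun z hz => ?_
  · exact Ideal.mem_span_singleton'.mpr ⟨v, rfl⟩
  · exact hmy v hv
  · obtain ⟨v, rfl⟩ := Ideal.mem_span_singleton'.mp hz
    exact ⟨0, zero_mem _, v, trivial, by simp⟩

theorem mul_mem_pow_succ_mul {A : Type*} [CommRing A] {Q U : Ideal A} {x v : A} {m : ℕ}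
    (hx : x ∈ Q) (hv : v ∈ Q ^ m * U) : x * v ∈ Q ^ (m + 1) * U := by
  rw [pow_succ', mul_assoc]
  exact Ideal.mul_mem_mul hx hv

theorem ofList_pow_succ_mul {A : Type*} [CommRing A] (l : List A) (x : A) (U : Ideal A) (m : ℕ) :
    Ideal.ofList (x :: l) ^ (m + 1) * U =
      Ideal.ofList l ^ (m + 1) * U ⊔ Ideal.span {x} * (Ideal.ofList (x :: l) ^ m * U) := by
  rw [ofList_eq_sup, sup_span_pow_succ_mul]

theorem mem_ofList_cons {A : Type*} [CommRing A] (l : List A) (x : A) :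
    x ∈ Ideal.ofList (x :: l) :=
  Ideal.subset_span (by simp)

theorem ofList_le_cons {A : Type*} [CommRing A] (l : List A) (x : A) :
    Ideal.ofList l ≤ Ideal.ofList (x :: l) := by
  rw [ofList_eq_sup]; exact le_sup_left

theorem relLength_ofList_pow_mul_succ {A : Type*} [CommRing A] {U V : Ideal A} (h : U ≤ V)
    (l : List A) (x : A) (m : ℕ) :
    relLength (Ideal.ofList (x :: l) ^ (m + 1) * U) (Ideal.ofList (x :: l) ^ (m + 1) * V) =
      relLength (Ideal.ofList (x :: l) ^ (m + 1) * U)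
        (Ideal.span {x} * (Ideal.ofList (x :: l) ^ m * V)) +
      relLength (Ideal.ofList (x :: l) ^ (m + 1) * U ⊔
        Ideal.span {x} * (Ideal.ofList (x :: l) ^ m * V)) (Ideal.ofList l ^ (m + 1) * V) := by
  rw [relLength_add (V := Ideal.ofList (x :: l) ^ (m + 1) * U ⊔
    Ideal.span {x} * (Ideal.ofList (x :: l) ^ m * V)) le_sup_left
    (sup_le (Ideal.mul_mono_right h) (by rw [ofList_pow_succ_mul]; exact le_sup_right)),
    relLength_sup_right]
  congr 1
  refine le_antisymm ?_ (relLength_mono_right _ (Ideal.mul_mono_left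
    (Ideal.pow_right_mono (ofList_le_cons l x) _)))
  refine relLength_le_of_surjective LinearMap.id (fun v hv => (Ideal.mul_mono_left
    (Ideal.pow_right_mono (ofList_le_cons l x) _)) hv) (fun v _ hv => hv) fun y hy => ?_
  rw [ofList_pow_succ_mul] at hy
  obtain ⟨u, hu, v, hv, rfl⟩ := Submodule.mem_sup.mp hy
  exact ⟨v, Ideal.mem_sup_right hv, u, hu, add_comm _ _⟩

theorem relLength_ofList_pow_mul_le {A : Type*} [CommRing A] {U V : Ideal A} (h : U ≤ V) :
    ∀ (l : List A) (m : ℕ), relLength (Ideal.ofList l ^ m * U) (Ideal.ofList l ^ m * V) ≤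
      relLength U V * (l.length.multichoose m : ℕ∞)
  | _, 0 => by simp
  | [], m + 1 => by
    have : relLength (Ideal.ofList ([] : List A) ^ (m + 1) * U)
      (Ideal.ofList ([] : List A) ^ (m + 1) * V) = 0 := relLength_eq_zero_iff.mpr (by simp)
    rw [this]
    exact zero_le
  | x :: l, m + 1 => by
    rw [relLength_ofList_pow_mul_succ h, List.length_cons, Nat.multichoose_succ_succ, add_comm]
    push_cast
    rw [mul_add]
    refine add_le_add (le_trans ?_ (relLength_ofList_pow_mul_le h l (m + 1)))
      (le_trans ?_ (relLength_ofList_pow_mul_le h (x :: l) m))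
    · refine relLength_anti_left _ (le_sup_of_le_left ?_)
      exact Ideal.mul_mono_left (Ideal.pow_right_mono (ofList_le_cons l x) _)
    · refine relLength_le_of_surjective (LinearMap.mulLeft A x)
        (fun v hv => Ideal.mem_span_singleton_mul.mpr ⟨v, hv, rfl⟩)
        (fun v _ hv => mul_mem_pow_succ_mul (mem_ofList_cons l x) hv) fun y hy => ?_
      obtain ⟨v, hv, rfl⟩ := Ideal.mem_span_singleton_mul.mp hy
      exact ⟨0, zero_mem _, v, hv, by simp⟩

theorem RevRegular.relLength_pow_mul {A : Type*} [CommRing A] {K K' : Ideal A} (h : K ≤ K') :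
    ∀ {l : List A}, RevRegular l → Ideal.ofList l ≤ K → ∀ m : ℕ,
      relLength (Ideal.ofList l ^ m * K) (Ideal.ofList l ^ m * K') =
        relLength K K' * (l.length.multichoose m : ℕ∞)
  | _, _, _, 0 => by simp
  | [], _, _, m + 1 => by
    have : relLength (Ideal.ofList ([] : List A) ^ (m + 1) * K)
      (Ideal.ofList ([] : List A) ^ (m + 1) * K') = 0 := relLength_eq_zero_iff.mpr (by simp)
    rw [this]
    simp
  | x :: l, hl, hQ, m + 1 => by
    refine le_antisymm (relLength_ofList_pow_mul_le h _ _) ?_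
    rw [relLength_ofList_pow_mul_succ h, List.length_cons, Nat.multichoose_succ_succ,
      add_comm (relLength _ _)]
    push_cast
    rw [mul_add, ← hl.1.relLength_pow_mul h ((ofList_le_cons l x).trans hQ) (m + 1),
      ← List.length_cons (a := x), ← hl.relLength_pow_mul h hQ m]
    refine add_le_add ?_ ?_
    · refine relLength_le_of_injective LinearMap.id (fun v hv => hv) fun v hv hv' => ?_
      refine hl.inf_le hQ (Ideal.mul_le_left hv) ?_
      have h1 : Ideal.span {x} * (Ideal.ofList (x :: l) ^ m * K') ≤
          Ideal.span {x} * Ideal.ofList (x :: l) ^ m := Ideal.mul_mono_right Ideal.mul_le_left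
      have h2 := sup_le_sup_left h1 (Ideal.ofList (x :: l) ^ (m + 1) * K)
      exact h2 hv'
    · exact relLength_le_of_injective (LinearMap.mulLeft A x)
        (fun v hv => Ideal.mem_span_singleton_mul.mpr ⟨v, hv, rfl⟩)
        fun v _ hv => hl.mem_of_mul_mem hQ hv

theorem mem_mul_span_singleton_iff {A : Type*} [CommRing A] {U : Ideal A} {w y : A} :
    y ∈ U * Ideal.span {w} ↔ ∃ u ∈ U, y = u * w := by
  rw [Ideal.mem_mul_span_singleton]
  simp only [eq_comm]

theorem RevRegular.multichoose_cons_le_relLength {A : Type*} [CommRing A] {l : List A} {x : A}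
    (hl : RevRegular (x :: l)) {K : Ideal A} (hK : Ideal.ofList (x :: l) ≤ K) {k : ℕ} {w w' : A}
    (hw : w ∈ Ideal.ofList (x :: l) ^ k)
    (hwK : w ∉ Ideal.ofList (x :: l) ^ k * K) (hw' : w' ∈ Ideal.ofList l ^ k)
    (hww' : ∀ j, ∀ q ∈ Ideal.ofList (x :: l) ^ (j + 1),
      q * (w - w') ∈ Ideal.span {x} * Ideal.ofList (x :: l) ^ (k + j))
    (h : ∀ j : ℕ, (l.length.multichoose j : ℕ∞) ≤
      relLength (Ideal.ofList l ^ (k + j) * K) (Ideal.ofList l ^ j * Ideal.span {w'})) (j : ℕ) :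
    ((x :: l).length.multichoose j : ℕ∞) ≤
      relLength (Ideal.ofList (x :: l) ^ (k + j) * K)
        (Ideal.ofList (x :: l) ^ j * Ideal.span {w}) := by
  induction j with
  | zero =>
    rw [Nat.multichoose_zero_right, Nat.cast_one, one_le_relLength_iff]
    refine fun h => hwK (h ?_)
    rw [pow_zero, one_mul]
    exact Ideal.mem_span_singleton_self w
  | succ j ih =>
    set Q := Ideal.ofList (x :: l) with hQ
    have hxQ : x ∈ Q := mem_ofList_cons l x
    have hJQ : Ideal.ofList l ≤ Q := ofList_le_cons l x
    rw [relLength_eq_add (P := Q ^ (k + (j + 1)) * K ⊔ Ideal.span {x} * Q ^ (k + j)) _ le_sup_left,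
      List.length_cons, Nat.multichoose_succ_succ, add_comm (Nat.multichoose _ _), Nat.cast_add]
    refine add_le_add (ih.trans ?_) ((h (j + 1)).trans ?_)
    · refine relLength_le_of_injective (LinearMap.mulLeft A x) (fun v hv => ⟨?_, ?_⟩)
        fun v _ hv => hl.mem_of_mul_mem hK hv
      · exact mul_mem_pow_succ_mul hxQ hv
      · obtain ⟨q, hq, rfl⟩ := mem_mul_span_singleton_iff.mp hv
        refine Ideal.mem_sup_right (Ideal.mem_span_singleton_mul.mpr ⟨q * w, ?_, rfl⟩)
        have h1 := Ideal.mul_mem_mul hq hw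
        rwa [← pow_add, add_comm] at h1
    · rw [← relLength_sup_right (Q ^ (k + (j + 1)) * K ⊔ Ideal.span {x} * Q ^ (k + j))]
      refine relLength_le_of_injective LinearMap.id (fun v hv => ?_) fun v hv hv' => ?_
      · obtain ⟨q, hq, rfl⟩ := mem_mul_span_singleton_iff.mp hv
        have hq := Ideal.pow_right_mono hJQ _ hq
        have h1 : LinearMap.id (R := A) (q * w') = -(q * (w - w')) + q * w := by
          simp; ring
        rw [h1]
        exact Submodule.add_mem_sup (Ideal.neg_mem_iff _ |>.mpr (Ideal.mem_sup_right (hww' j q hq)))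
          (mem_mul_span_singleton_iff.mpr ⟨q, hq, rfl⟩)
      · refine hl.inf_le hK ?_ hv'
        obtain ⟨q, hq, rfl⟩ := mem_mul_span_singleton_iff.mp hv
        have h1 := Ideal.mul_mem_mul hq hw'
        rwa [← pow_add, add_comm] at h1

theorem RevRegular.multichoose_le_relLength {A : Type*} [CommRing A] :
    ∀ {l : List A}, RevRegular l → ∀ {K : Ideal A}, Ideal.ofList l ≤ K → ∀ (k : ℕ) (w : A),
      w ∈ Ideal.ofList l ^ k → w ∉ Ideal.ofList l ^ k * K → ∀ j : ℕ,
      (l.length.multichoose j : ℕ∞) ≤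
        relLength (Ideal.ofList l ^ (k + j) * K) (Ideal.ofList l ^ j * Ideal.span {w})
  | [], _, K, _, k, w, _, hwK, j => by
    cases j with
    | zero =>
      simp only [Nat.multichoose_zero_right, Nat.cast_one, one_le_relLength_iff]
      exact fun h => hwK (h (by simp))
    | succ j => simp
  | x :: l, hl, K, hK, k, w, hw, hwK, j => by
    have hxQ : x ∈ Ideal.ofList (x :: l) := mem_ofList_cons l x
    have hJQ : Ideal.ofList l ≤ Ideal.ofList (x :: l) := ofList_le_cons l x
    induction k generalizing w j with
    | zero =>
      rw [pow_zero, one_mul] at hwK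
      refine hl.multichoose_cons_le_relLength hK (w' := w) hw (by simpa using hwK) (by simp)
        (by simp) (hl.1.multichoose_le_relLength (hJQ.trans hK) 0 w (by simp) (by simpa using hwK)) j
    | succ k ih =>
      by_cases hA : w ∈ Ideal.ofList (x :: l) ^ (k + 1) * K ⊔
        Ideal.span {x} * Ideal.ofList (x :: l) ^ k
      · obtain ⟨α, hα, β, hβ, rfl⟩ := mem_sup_span_mul_iff.mp hA
        refine (ih β hβ (fun h => hwK ?_) j).trans ?_
        · exact Ideal.add_mem _ hα (mul_mem_pow_succ_mul hxQ h)
        · rw [← relLength_sup_right (Ideal.ofList (x :: l) ^ (k + 1 + j) * K)]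
          refine relLength_le_of_injective (LinearMap.mulLeft A x) (fun v hv => ?_) fun v _ hv => ?_
          · obtain ⟨q, hq, rfl⟩ := mem_mul_span_singleton_iff.mp hv
            have h1 : LinearMap.mulLeft A x (q * β) = -(q * α) + q * (α + x * β) := by
              simp; ring
            rw [h1]
            refine Submodule.add_mem_sup (Ideal.neg_mem_iff _ |>.mpr ?_)
              (mem_mul_span_singleton_iff.mpr ⟨q, hq, rfl⟩)
            rw [add_comm (k + 1), pow_add, mul_assoc]
            exact Ideal.mul_mem_mul hq hα
          · refine hl.mem_of_mul_mem hK ?_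
            rwa [add_right_comm] at hv
      · have hw2 := hw
        rw [ofList_eq_sup, sup_span_pow_succ, ← ofList_eq_sup] at hw2
        obtain ⟨w', hw', w'', hw'', rfl⟩ := mem_sup_span_mul_iff.mp hw2
        have hJ := hl.1.multichoose_le_relLength (hJQ.trans hK) (k + 1) w' hw' (fun h =>
          hA (mem_sup_span_mul_iff.mpr
            ⟨w', Ideal.mul_mono_left (Ideal.pow_right_mono hJQ _) h, w'', hw'', rfl⟩))
        refine hl.multichoose_cons_le_relLength hK (w' := w') hw hwK hw' (fun i q hq => ?_) hJ j
        rw [add_sub_cancel_left, mul_left_comm]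
        refine Ideal.mem_span_singleton_mul.mpr ⟨q * w'', ?_, rfl⟩
        rw [add_right_comm, add_assoc, add_comm, pow_add]
        exact Ideal.mul_mem_mul hq hw''

theorem RevRegular.multichoose_le_relLength_of_notMem {A : Type*} [CommRing A] {l : List A}
    (hl : RevRegular l) {K : Ideal A} (hK : Ideal.ofList l ≤ K) {k : ℕ} {w : A}
    (hwK : w ∉ Ideal.ofList l ^ k * K) (j : ℕ) :
    (l.length.multichoose j : ℕ∞) ≤
      relLength (Ideal.ofList l ^ (k + j) * K) (Ideal.ofList l ^ j * Ideal.span {w}) := by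
  by_cases hw : w ∈ Ideal.ofList l ^ k
  · exact hl.multichoose_le_relLength hK k w hw hwK j
  · classical
    have hex : ∃ i, w ∉ Ideal.ofList l ^ i := ⟨k, hw⟩
    obtain ⟨i, hi⟩ : ∃ i, Nat.find hex = i + 1 := Nat.exists_eq_succ_of_ne_zero (fun h => by
      have := Nat.find_spec hex
      rw [h] at this
      simp at this)
    have h1 : w ∉ Ideal.ofList l ^ (i + 1) := hi ▸ Nat.find_spec hex
    have h2 : w ∈ Ideal.ofList l ^ i := not_not.mp (Nat.find_min hex (m := i) (by omega))
    have h3 : i + 1 ≤ k := hi ▸ Nat.find_min' hex hw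
    refine (hl.multichoose_le_relLength le_rfl i w h2 (by rwa [← pow_succ]) j).trans ?_
    refine relLength_anti_left _ (Ideal.mul_le_left.trans ?_)
    rw [← pow_succ]
    exact Ideal.pow_le_pow_right (by omega)

theorem RevRegular.relLength_pow_top {A : Type*} [CommRing A] {l : List A} (hl : RevRegular l)
    (n : ℕ) : relLength (Ideal.ofList l ^ (n + 1)) ⊤ =
      relLength (Ideal.ofList l) ⊤ * ((l.length + 1).multichoose n : ℕ∞) := by
  induction n with
  | zero => simp
  | succ n ih =>
    rw [relLength_add (V := Ideal.ofList l ^ (n + 1)) (Ideal.pow_le_pow_right (by omega)) le_top, ih,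
      Nat.multichoose_succ_succ, Nat.cast_add, mul_add,
      ← hl.relLength_pow_mul le_top le_rfl (n + 1), Ideal.mul_top, ← pow_succ]

theorem RevRegular.relLength_add_relLength {A : Type*} [CommRing A] {l : List A}
    (hl : RevRegular l) {I : Ideal A} (hI : Ideal.ofList l ≤ I) (n : ℕ) :
    relLength (Ideal.ofList l ^ (n + 1) * I) (I ^ (n + 2)) + relLength (I ^ (n + 2)) ⊤ =
      relLength I ⊤ * (l.length.multichoose (n + 1) : ℕ∞) +
        relLength (Ideal.ofList l) ⊤ * ((l.length + 1).multichoose n : ℕ∞) := by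
  rw [← relLength_add _ le_top, relLength_add (V := Ideal.ofList l ^ (n + 1)) Ideal.mul_le_left
    le_top, hl.relLength_pow_top, ← hl.relLength_pow_mul le_top hI (n + 1), Ideal.mul_top]
  rw [pow_succ I]
  exact Ideal.mul_mono_left (Ideal.pow_right_mono hI _)

theorem relLength_pow_le {A : Type*} [CommRing A] {l : List A} {I : Ideal A}
    (hI : Ideal.ofList l ≤ I) {r : ℕ} (hr : I ^ (r + 1) = Ideal.ofList l * I ^ r) (k : ℕ) :
    relLength (Ideal.ofList l ^ (r + k) * I) (I ^ (r + k + 1)) ≤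
      relLength (Ideal.ofList l ^ r * I) (I ^ (r + 1)) * (l.length.multichoose k : ℕ∞) := by
  have h1 : ∀ k, I ^ (r + k + 1) = Ideal.ofList l ^ k * I ^ (r + 1) := by
    intro k
    induction k with
    | zero => simp
    | succ k ih =>
      rw [← add_assoc, pow_succ' I (r + k + 1), ih]
      nth_rw 1 [hr]
      ring
  rw [h1, add_comm r k, pow_add, mul_assoc]
  refine relLength_ofList_pow_mul_le ?_ l k
  rw [pow_succ I]
  exact Ideal.mul_mono_left (Ideal.pow_right_mono hI _)

theorem RevRegular.le_or_inf_le {A : Type*} [CommRing A] {l : List A}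
    (hl : RevRegular l) {I K : Ideal A} (hI : Ideal.ofList l ≤ I) (hK : Ideal.ofList l ≤ K) {δ : ℕ}
    (hIK : Ideal.ofList l ^ δ * I ≤ K)
    (h : ∀ a b : ℕ, ∃ n, a ≤ n ∧ b ≤ n ∧
      relLength (Ideal.ofList l ^ n * I) (I ^ (n + 1)) <
        (l.length.multichoose (n - a) : ℕ∞) + (l.length.multichoose (n - b) : ℕ∞)) :
    (∀ m, I ^ (m + δ + 1) ≤ Ideal.ofList l ^ m * K) ∨
      ∀ m, I ^ (m + δ + 1) ⊓ Ideal.ofList l ^ m * K ≤ Ideal.ofList l ^ (m + δ) * I := by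
  by_contra! hcon
  obtain ⟨⟨b, hb⟩, a, ha⟩ := hcon
  obtain ⟨w, hw, hwK⟩ := Set.not_subset.mp hb
  obtain ⟨u, ⟨hu, huK⟩, huI⟩ := Set.not_subset.mp ha
  obtain ⟨n, han, hbn, hlt⟩ := h (a + δ) (b + δ)
  refine hlt.not_ge ?_
  obtain ⟨i, rfl⟩ := Nat.exists_eq_add_of_le han
  obtain ⟨j, hj⟩ := Nat.exists_eq_add_of_le hbn
  have hpow : ∀ k x, Ideal.ofList l ^ k * I ^ x ≤ I ^ (k + x) := fun k x => by
    rw [pow_add]; exact Ideal.mul_mono_left (Ideal.pow_right_mono hI _)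
  have hspan : ∀ {z : A} {U : Ideal A}, z ∈ U → Ideal.span {z} ≤ U := fun hz =>
    (Ideal.span_singleton_le_iff_mem _).mpr hz
  rw [relLength_eq_add (P := Ideal.ofList l ^ (a + i) * K)]
  · refine add_le_add ?_ ?_
    · rw [Nat.add_sub_cancel_left]
      refine (hl.multichoose_le_relLength_of_notMem hI huI i).trans
        (relLength_mono_right _ (le_inf ?_ ?_))
      · refine (Ideal.mul_mono_right (hspan hu)).trans ((hpow _ _).trans_eq ?_)
        congr 1; omega
      · refine (Ideal.mul_mono_right (hspan huK)).trans_eq ?_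
        rw [← mul_assoc, ← pow_add, add_comm]
    · have hj' : a + i = b + j := by omega
      rw [hj', hj, Nat.add_sub_cancel_left]
      refine (hl.multichoose_le_relLength_of_notMem hK hwK j).trans (relLength_mono_right _ ?_)
      refine (Ideal.mul_mono_right (hspan hw)).trans ((hpow _ _).trans_eq ?_)
      congr 1; omega
  · rw [add_right_comm, pow_add, mul_assoc]
    exact Ideal.mul_mono_right hIK

theorem exists_socle {A : Type*} [CommRing A] {M K : Ideal A} (hK : K ≠ ⊤) {k : ℕ}
    (hM : M ^ k ≤ K) : ∃ y, y ∉ K ∧ ∀ r ∈ M, r * y ∈ K := by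
  induction k with
  | zero => exact absurd (by simpa using hM) hK
  | succ k ih =>
    by_cases h : M ^ k ≤ K
    · exact ih h
    · obtain ⟨y, hy, hyK⟩ := Set.not_subset.mp h
      exact ⟨y, hyK, fun r hr => hM (by rw [pow_succ']; exact Ideal.mul_mem_mul hr hy)⟩

theorem eq_multichoose_of_eq_add {d δ ε : ℕ} {s : ℕ → ℕ∞} (hδ : δ + ε = 1)
    (hs : ∀ m, s (m + δ) ≤ (d.multichoose m : ℕ∞)) (hs1 : s 1 = d) (hd : 0 < d) :
    (ε = 1 ∨ d = 1) ∧ s 1 = (d.multichoose ε : ℕ∞) := by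
  have h1 := hs ε
  rw [add_comm, hδ, hs1] at h1
  rcases Nat.eq_zero_or_pos ε with rfl | h
  · have : d ≤ 1 := by simpa using h1
    have : d = 1 := by omega
    subst this
    simp [hs1]
  · have : ε = 1 := by omega
    subst this
    simp [hs1]

theorem RevRegular.relLength_eq_multichoose {A : Type*} [CommRing A] [IsLocalRing A]
    [IsNoetherianRing A] {l : List A} (hl : RevRegular l) (hd : 0 < l.length) {I : Ideal A}
    (hI : Ideal.ofList l ≤ I) {k : ℕ} (hk : maximalIdeal A ^ k ≤ Ideal.ofList l)
    (h : ∀ a b : ℕ, ∃ n, a ≤ n ∧ b ≤ n ∧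
      relLength (Ideal.ofList l ^ n * I) (I ^ (n + 1)) <
        (l.length.multichoose (n - a) : ℕ∞) + (l.length.multichoose (n - b) : ℕ∞))
    (h1 : relLength (Ideal.ofList l * I) (I ^ 2) = l.length) (n : ℕ) :
    relLength (Ideal.ofList l ^ (n + 1) * I) (I ^ (n + 2)) = l.length.multichoose (n + 1) := by
  set Q := Ideal.ofList l with hQ
  obtain ⟨δ, ε, K₀, v, hδε, hvQ, hvK₀, hvI, hIK₀, hQK₀⟩ : ∃ δ ε : ℕ, ∃ K₀ : Ideal A, ∃ v,
      δ + ε = 1 ∧ v ∈ Q ^ ε ∧ v ∉ Q ^ ε * K₀ ∧ v ∈ I ^ 2 ∧ Q ^ δ * I ≤ K₀ ∧ Q ≤ K₀ := by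
    by_cases h2 : I ^ 2 ≤ Q
    · have h3 : ¬ I ^ 2 ≤ Q * I := by
        rw [← one_le_relLength_iff, h1]
        exact_mod_cast hd
      obtain ⟨v, hv, hvQ⟩ := Set.not_subset.mp h3
      exact ⟨0, 1, I, v, rfl, by simpa using h2 hv, by simpa using hvQ, hv, by simp, hI⟩
    · obtain ⟨v, hv, hvQ⟩ := Set.not_subset.mp h2
      exact ⟨1, 0, Q, v, rfl, by simp, by simpa using hvQ, hv, by
        rw [pow_one]; exact Ideal.mul_le_left, le_rfl⟩
  obtain ⟨K, ⟨hK₀K, hvK⟩, hmax⟩ := (wellFounded_gt (α := Ideal A)).has_min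
    {K : Ideal A | K₀ ≤ K ∧ v ∉ Q ^ ε * K} ⟨K₀, le_rfl, hvK₀⟩
  have hKtop : K ≠ ⊤ := fun h => hvK (by rw [h, Ideal.mul_top]; exact hvQ)
  have hQK : Q ≤ K := hQK₀.trans hK₀K
  obtain ⟨y, hyK, hmy⟩ := exists_socle hKtop (hk.trans hQK)
  set K' := K ⊔ Ideal.span {y} with hK'
  have hKK' : K ≤ K' := le_sup_left
  have hvK' : v ∈ Q ^ ε * K' := by
    by_contra hcon
    refine hmax K' ⟨hK₀K.trans hKK', hcon⟩ (lt_of_le_of_ne hKK' fun h => hyK ?_)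
    rw [h]
    exact Ideal.mem_sup_right (Ideal.mem_span_singleton_self y)
  have hlen : ∀ m, relLength (Q ^ m * K) (Q ^ m * K') = (l.length.multichoose m : ℕ∞) := fun m => by
    rw [hl.relLength_pow_mul hKK' hQK, hK', relLength_sup_span_singleton hyK hmy, one_mul]
  have hIK : Q ^ δ * I ≤ K := hIK₀.trans hK₀K
  have hε : ε + δ + 1 = 2 := by omega
  have hKI : ∀ m, I ^ (m + δ + 1) ⊓ Q ^ m * K ≤ Q ^ (m + δ) * I := by
    refine (hl.le_or_inf_le hI hQK hIK h).resolve_left fun hle => hvK (hle ε ?_)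
    rwa [hε]
  have hIK' : ∀ m, I ^ (m + δ + 1) ≤ Q ^ m * K' := by
    refine (hl.le_or_inf_le hI (hQK.trans hKK') (hIK.trans hKK') h).resolve_right fun hle => ?_
    have h2 := hle ε ⟨by rwa [hε], hvK'⟩
    rw [pow_add, mul_assoc] at h2
    exact hvK (Ideal.mul_mono_right hIK h2)
  have hs : ∀ m, relLength (Q ^ (m + δ) * I) (I ^ (m + δ + 1)) =
      relLength (Q ^ m * K) (I ^ (m + δ + 1)) := fun m => by
    rw [relLength_eq_add (P := Q ^ m * K), relLength_eq_zero_iff.mpr (hKI m), zero_add]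
    rw [pow_add, mul_assoc]
    exact Ideal.mul_mono_right hIK
  obtain ⟨hε1, hsε⟩ := eq_multichoose_of_eq_add
    (s := fun n => relLength (Q ^ n * I) (I ^ (n + 1))) hδε (fun m => by
      rw [hs, ← hlen m]
      exact relLength_mono_right _ (hIK' m)) (by simpa using h1) hd
  have hsup : Q ^ ε * K' ≤ Q ^ ε * K ⊔ I ^ 2 := by
    have h2 := hs ε
    rw [add_comm ε, hδε] at h2
    have h3 : relLength (Q ^ ε * K) (Q ^ ε * K') = relLength (Q ^ ε * K) (Q ^ ε * K ⊔ I ^ 2) +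
        relLength (Q ^ ε * K ⊔ I ^ 2) (Q ^ ε * K') := by
      refine relLength_add le_sup_left (sup_le (Ideal.mul_mono_right hKK') ?_)
      have h4 := hIK' ε
      rwa [hε] at h4
    rw [relLength_sup_right, ← h2, hlen, ← hsε] at h3
    rw [← relLength_eq_zero_iff]
    have h5 : relLength (Q ^ 1 * I) (I ^ (1 + 1)) ≠ ⊤ := by
      rw [hsε]; exact ENat.natCast_ne_top _
    exact (ENat.addLECancellable_of_ne_top h5).inj.mp (h3.symm.trans (add_zero _).symm)
  have hsn : relLength (Q ^ (n + 1) * I) (I ^ (n + 2)) = l.length.multichoose (n + ε) := by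
    have h2 : n + 1 = n + ε + δ := by omega
    have h3 : n + 2 = n + ε + δ + 1 := by omega
    rw [h2, h3, hs, ← hlen]
    refine le_antisymm (relLength_mono_right _ (hIK' _)) ?_
    rw [← relLength_sup_right _ (I ^ _)]
    refine relLength_mono_right _ ?_
    have h4 := Ideal.mul_mono_right (I := Q ^ n) hsup
    rw [Ideal.mul_sup _ (Q ^ ε * K), ← mul_assoc, ← mul_assoc, ← pow_add] at h4
    refine h4.trans (sup_le_sup_left ?_ _)
    rw [← h3, pow_add I]
    exact Ideal.mul_mono_left (Ideal.pow_right_mono hI _)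
  rw [hsn]
  rcases hε1 with rfl | h2
  · rfl
  · rw [h2, Nat.multichoose_one, Nat.multichoose_one]

section

open Filter Topology

theorem tendsto_choose_div_pow (a k : ℕ) :
    Tendsto (fun n : ℕ => ((n - a + k).choose k : ℝ) / (n : ℝ) ^ k) atTop
      (𝓝 (1 / k.factorial)) := by
  have h0 : Tendsto (fun n : ℕ => n - a + k) atTop atTop :=
    tendsto_atTop_mono (fun n => Nat.le_add_right _ _) (tendsto_sub_atTop_nat a)
  have h1 := (isEquivalent_choose k).comp_tendsto h0
  have h2 : Tendsto (fun n : ℕ => ((n - a + k : ℕ) : ℝ) / n) atTop (𝓝 1) := by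
    have h3 : Tendsto (fun n : ℕ => 1 + ((k : ℝ) - a) / n) atTop (𝓝 (1 + 0)) :=
      tendsto_const_nhds.add (tendsto_const_div_atTop_nhds_zero_nat _)
    rw [add_zero] at h3
    refine h3.congr' ?_
    filter_upwards [eventually_ge_atTop (a + 1)] with n hn
    have hn0 : (n : ℝ) ≠ 0 := by
      have : 0 < n := by omega
      positivity
    rw [Nat.cast_add, Nat.cast_sub (by omega)]
    field_simp
    ring
  have h4 := (h2.pow k).mul_const (1 / (k.factorial : ℝ))
  rw [one_pow, one_mul] at h4
  have h5 := h1.mul (Asymptotics.IsEquivalent.refl (u := fun n : ℕ => 1 / (n : ℝ) ^ k))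
  have h6 : Tendsto (((fun n : ℕ => (n : ℝ) ^ k / k.factorial) ∘ fun n => n - a + k) *
      fun n : ℕ => 1 / (n : ℝ) ^ k) atTop (𝓝 (1 / k.factorial)) := by
    refine h4.congr fun n => ?_
    simp only [Function.comp, Pi.mul_apply]
    rw [div_pow]
    ring
  refine (h5.symm.tendsto_nhds h6).congr fun n => ?_
  simp [div_eq_mul_inv]

theorem tendsto_choose_div_pow_zero (a : ℕ) {k j : ℕ} (h : k < j) :
    Tendsto (fun n : ℕ => ((n - a + k).choose k : ℝ) / (n : ℝ) ^ j) atTop (𝓝 0) := by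
  obtain ⟨i, rfl⟩ := Nat.exists_eq_add_of_lt h
  have h1 := (tendsto_choose_div_pow a k).mul (tendsto_const_div_pow (1 : ℝ) (i + 1) (by omega))
  rw [mul_zero] at h1
  refine h1.congr fun n => ?_
  rw [div_mul_div_comm, mul_one, ← pow_add, add_assoc]

theorem multichoose_succ_eq_choose (D n : ℕ) :
    (D + 1).multichoose n = (n + D).choose D := by
  rw [Nat.multichoose_eq, ← Nat.choose_symm_add]
  congr 1
  omega

theorem eq_zero_of_sum_choose_eq_zero : ∀ (d : ℕ) (c : ℕ → ℤ) (N : ℕ),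
    (∀ n ≥ N, ∑ i ∈ Finset.range (d + 1), c i * ((n + d - i).choose (d - i) : ℤ) = 0) →
      ∀ i ≤ d, c i = 0
  | 0, c, N, h, i, hi => by
    have h1 := h N le_rfl
    simp only [zero_add, Finset.range_one, Finset.sum_singleton] at h1
    obtain rfl : i = 0 := by omega
    simpa using h1
  | d + 1, c, N, h, i, hi => by
    have h1 : ∀ i ≤ d, c i = 0 := by
      refine eq_zero_of_sum_choose_eq_zero d c (N + 1) fun n hn => ?_
      obtain ⟨m, rfl⟩ : ∃ m, n = m + 1 := ⟨n - 1, by omega⟩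
      have h2 := h (m + 1) (by omega)
      have h3 := h m (by omega)
      rw [Finset.sum_range_succ] at h2 h3
      rw [← sub_eq_zero.mpr (h2.trans h3.symm)]
      simp only [Nat.sub_self, Nat.choose_zero_right]
      rw [add_sub_add_right_eq_sub, ← Finset.sum_sub_distrib]
      refine Finset.sum_congr rfl fun i hi => ?_
      have hi : i ≤ d := Nat.lt_succ_iff.mp (Finset.mem_range.mp hi)
      have e1 : m + 1 + (d + 1) - i = (m + 1 + d - i) + 1 := by omega
      have e2 : d + 1 - i = (d - i) + 1 := by omega
      have e3 : m + (d + 1) - i = m + 1 + d - i := by omega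
      rw [e1, e2, e3, Nat.choose_succ_succ]
      push_cast
      ring
    rcases Nat.lt_or_ge i (d + 1) with hlt | hge
    · exact h1 i (by omega)
    · obtain rfl : i = d + 1 := by omega
      have h2 := h N le_rfl
      rw [Finset.sum_range_succ, Finset.sum_eq_zero (fun i hi => by
        rw [h1 i (Nat.lt_succ_iff.mp (Finset.mem_range.mp hi)), zero_mul])] at h2
      simpa using h2

theorem tendsto_div_pow_of_hilbert {D : ℕ} {H s : ℕ → ℕ} {q c r N : ℕ} {e : ℕ → ℤ}
    (hrel : ∀ m, s (m + 1) + H (m + 1) =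
      H 0 * (D + 1).multichoose (m + 1) + q * (D + 1 + 1).multichoose m)
    (hHS : ∀ n ≥ N, (H n : ℤ) =
      ∑ i ∈ Finset.range (D + 1 + 1),
        (-1) ^ i * e i * ((n + (D + 1) - i).choose (D + 1 - i) : ℤ))
    (hbound : ∀ k, s (r + k) ≤ c * (D + 1).multichoose k)
    (he : e 1 = e 0 - (H 0 : ℤ) + 1) :
    (q : ℤ) = e 0 ∧
      Tendsto (fun n => (s n : ℝ) / (n : ℝ) ^ D) atTop (𝓝 (1 / D.factorial)) := by
  set T : ℕ → ℝ := fun n => ∑ i ∈ Finset.range D,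
    (-1) ^ (i + 2) * (e (i + 2) : ℝ) * ((n - 0 + (D - 1 - i)).choose (D - 1 - i) : ℝ) with hT
  have hTlim : Tendsto (fun n => T n / (n : ℝ) ^ D) atTop (𝓝 0) := by
    simp only [hT, Finset.sum_div]
    have h0 : (0 : ℝ) = ∑ i ∈ Finset.range D, (0 : ℝ) := by simp
    rw [h0]
    refine tendsto_finsetSum _ fun i hi => ?_
    have hi := Finset.mem_range.mp hi
    have h1 := (tendsto_choose_div_pow_zero 0 (k := D - 1 - i) (j := D) (by omega)).const_mul
      ((-1) ^ (i + 2) * (e (i + 2) : ℝ))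
    rw [mul_zero] at h1
    exact h1.congr fun n => by ring
  have hs : ∀ᶠ n : ℕ in atTop, (s n : ℝ) =
      ((q : ℝ) - e 0) * ((n - 0 + (D + 1)).choose (D + 1) : ℝ) +
        ((H 0 : ℝ) - q + e 1) * ((n - 0 + D).choose D : ℝ) - T n := by
    filter_upwards [eventually_ge_atTop (N + 1)] with n hn
    obtain ⟨m, rfl⟩ : ∃ m, n = m + 1 := ⟨n - 1, by omega⟩
    have h1 : (s (m + 1) : ℝ) + H (m + 1) =
      H 0 * ((m + 1 + D).choose D : ℝ) + q * ((m + (D + 1)).choose (D + 1) : ℝ) := by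
      rw [← multichoose_succ_eq_choose, ← multichoose_succ_eq_choose]
      exact_mod_cast hrel m
    have h2 : (H (m + 1) : ℝ) = ∑ i ∈ Finset.range (D + 1 + 1),
        (-1) ^ i * (e i : ℝ) * ((m + 1 + (D + 1) - i).choose (D + 1 - i) : ℝ) := by
      exact_mod_cast hHS (m + 1) (by omega)
    have h3 : ((m + 1 + (D + 1)).choose (D + 1) : ℝ) =
        (m + 1 + D).choose D + (m + (D + 1)).choose (D + 1) := by
      have e1 : m + 1 + (D + 1) = (m + 1 + D) + 1 := by omega
      have e2 : m + (D + 1) = m + 1 + D := by omega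
      rw [e1, Nat.choose_succ_succ, e2, Nat.cast_add]
    rw [Finset.sum_range_succ', Finset.sum_range_succ'] at h2
    have h4 : T (m + 1) = ∑ i ∈ Finset.range D, (-1) ^ (i + 1 + 1) * (e (i + 1 + 1) : ℝ) *
        ((m + 1 + (D + 1) - (i + 1 + 1)).choose (D + 1 - (i + 1 + 1)) : ℝ) := by
      refine Finset.sum_congr rfl fun i hi => ?_
      have hi := Finset.mem_range.mp hi
      have e1 : m + 1 - 0 + (D - 1 - i) = m + 1 + (D + 1) - (i + 1 + 1) := by omega
      have e2 : D - 1 - i = D + 1 - (i + 1 + 1) := by omega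
      rw [e1, e2]
    rw [← h4] at h2
    have e3 : m + 1 + (D + 1) - (0 + 1) = m + 1 + D := by omega
    have e4 : D + 1 - (0 + 1) = D := by omega
    rw [e3, e4] at h2
    simp only [Nat.sub_zero] at h2 ⊢
    rw [h3] at h2 ⊢
    linear_combination h1 - h2
  have hq : (q : ℤ) = e 0 := by
    have h1 : Tendsto (fun n => (s n : ℝ) / (n : ℝ) ^ (D + 1)) atTop
        (𝓝 (((q : ℝ) - e 0) * (1 / (D + 1).factorial))) := by
      have h2 := (((tendsto_choose_div_pow 0 (D + 1)).const_mul ((q : ℝ) - e 0)).add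
        ((tendsto_choose_div_pow_zero 0 (k := D) (j := D + 1) (by omega)).const_mul
          ((H 0 : ℝ) - q + e 1))).sub
        (hTlim.mul (tendsto_one_div_atTop_nhds_zero_nat (𝕜 := ℝ)))
      simp only [mul_zero, add_zero, sub_zero] at h2
      refine h2.congr' ?_
      filter_upwards [hs] with n hn
      rw [hn, div_mul_div_comm, ← pow_succ]
      simp only [Nat.sub_zero]
      ring
    have h2 : Tendsto (fun n => (s n : ℝ) / (n : ℝ) ^ (D + 1)) atTop (𝓝 0) := by
      have h3 := (tendsto_choose_div_pow_zero r (k := D) (j := D + 1) (by omega)).const_mul (c : ℝ)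
      rw [mul_zero] at h3
      refine squeeze_zero' (Eventually.of_forall fun n => by positivity) ?_ h3
      filter_upwards [eventually_ge_atTop r] with n hn
      obtain ⟨k, rfl⟩ := Nat.exists_eq_add_of_le hn
      rw [← mul_div_assoc]
      gcongr
      have h4 := hbound k
      rw [multichoose_succ_eq_choose] at h4
      rw [Nat.add_sub_cancel_left]
      exact_mod_cast h4
    have h3 := tendsto_nhds_unique h1 h2
    have h4 : (q : ℝ) - e 0 = 0 := by
      refine (mul_eq_zero.mp h3).resolve_right ?_
      positivity
    have h5 : (q : ℝ) = (e 0 : ℝ) := sub_eq_zero.mp h4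
    exact_mod_cast h5
  refine ⟨hq, ?_⟩
  have h1 := (tendsto_choose_div_pow 0 D).sub hTlim
  rw [sub_zero] at h1
  refine h1.congr' ?_
  filter_upwards [hs] with n hn
  have hq' : (q : ℝ) = e 0 := by exact_mod_cast hq
  rw [hn, he, hq']
  push_cast
  ring

theorem exists_lt_multichoose_add {D : ℕ} {s : ℕ → ℕ}
    (hs : Tendsto (fun n => (s n : ℝ) / (n : ℝ) ^ D) atTop (𝓝 (1 / D.factorial))) (a b : ℕ) :
    ∃ n, a ≤ n ∧ b ≤ n ∧
      s n < (D + 1).multichoose (n - a) + (D + 1).multichoose (n - b) := by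
  by_contra! hcon
  have h1 := (tendsto_choose_div_pow a D).add (tendsto_choose_div_pow b D)
  have h2 := le_of_tendsto_of_tendsto h1 hs (by
    filter_upwards [eventually_ge_atTop a, eventually_ge_atTop b] with n ha hb
    rw [← add_div]
    gcongr
    have h3 := hcon n ha hb
    rw [multichoose_succ_eq_choose, multichoose_succ_eq_choose] at h3
    exact_mod_cast h3)
  have h3 : (0 : ℝ) < 1 / D.factorial := by positivity
  linarith

end

/-- Main theorem, assertion (iv): if `e₁ = e₀ - ℓ_A(A/I) + 1` and `ℓ_A(I²/QI) = d`,
then `ℓ_A(A/I^{n+1}) = e₀·C(n+d,d) - e₁·C(n+d-1,d-1)` for all `n ≥ 1`, and `eᵢ = 0`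
for all `2 ≤ i ≤ d`.  Here `H n = ℓ_A(A/I^{n+1})` (so `H 0 = ℓ_A(A/I)`). -/
theorem main_theorem_iv (A : Type*) [CommRing A] [IsLocalRing A] [IsNoetherianRing A]
    [Infinite (ResidueField A)]
    (d : ℕ) (hd : 0 < d) (hCM : IsCohenMacaulayLocal A d)
    (I Q : Ideal A) (hI : IsPrimaryToMax A I)
    (a : Fin d → A) (hQ : Q = Ideal.span (Set.range a)) (hQI : Q ≤ I)
    (hred : ∃ r : ℕ, I ^ (r + 1) = Q * I ^ r)
    (H : ℕ → ℕ)
    (hH : ∀ n : ℕ, moduleLength A (A ⧸ I ^ (n + 1)) = (H n : ℕ∞))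
    (e : ℕ → ℤ) (N : ℕ)
    (hHS : ∀ n ≥ N, (H n : ℤ) =
      ∑ i ∈ Finset.range (d + 1),
        (-1) ^ i * e i * ((n + d - i).choose (d - i) : ℤ))
    (he : e 1 = e 0 - (H 0 : ℤ) + 1)
    (hc : moduleLength A
      (↥(I ^ 2) ⧸ Submodule.comap (I ^ 2).subtype (Q * I)) = (d : ℕ∞)) :
    (∀ n : ℕ, 1 ≤ n → (H n : ℤ) =
      e 0 * ((n + d).choose d : ℤ) - e 1 * ((n + d - 1).choose (d - 1) : ℤ)) ∧
    ∀ i : ℕ, 2 ≤ i → i ≤ d → e i = 0 := by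
  obtain ⟨D, rfl⟩ : ∃ D, d = D + 1 := ⟨d - 1, by omega⟩
  obtain ⟨-, rs, hrs, hrsm, hreg⟩ := hCM
  have hlen : (List.ofFn a).length = D + 1 := List.length_ofFn
  have hl : Ideal.ofList (List.ofFn a) = Q := by
    rw [hQ, Ideal.ofList]
    congr 1
    ext x
    exact List.mem_ofFn
  have hml : ∀ x ∈ List.ofFn a, x ∈ maximalIdeal A := fun x hx =>
    hI.1 (hQI (hl ▸ Ideal.subset_span hx))
  obtain ⟨k, hk⟩ : ∃ k, maximalIdeal A ^ k ≤ Q := by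
    obtain ⟨j, hj⟩ := Ideal.exists_pow_le_of_le_radical_of_fg hI.2
      (IsNoetherian.noetherian (maximalIdeal A))
    obtain ⟨r, hr⟩ := hred
    refine ⟨j * (r + 1), ?_⟩
    rw [pow_mul]
    exact (Ideal.pow_right_mono hj (r + 1)).trans (hr.le.trans Ideal.mul_le_left)
  have hdepth : DepthGE (D + 1) (⊥ : Ideal A) := by
    simpa [hrs] using depthGE_of_isWeaklyRegular hrsm hreg.toIsWeaklyRegular rs.length le_rfl
  have hrr : RevRegular (List.ofFn a) :=
    DepthGE.revRegular (pre := []) (by simpa using hdepth) hml (hl ▸ hk)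
  obtain ⟨r, hr⟩ := hred
  have hH' : ∀ n, relLength (I ^ (n + 1)) ⊤ = (H n : ℕ∞) := fun n => by
    have h := hH n
    rw [moduleLength, ← Module.coe_length] at h
    rw [relLength_top]
    exact_mod_cast h
  have hc' : relLength (Q * I) (I ^ 2) = ((D + 1 : ℕ) : ℕ∞) := by
    rw [moduleLength, ← Module.coe_length] at hc
    exact_mod_cast hc
  obtain ⟨q, hq⟩ : ∃ q : ℕ, relLength Q ⊤ = q := by
    refine ⟨_, (ENat.natCast_toNat (ne_top_of_le_ne_top (ENat.natCast_ne_top (H r)) ?_)).symm⟩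
    rw [← hH' r]
    exact relLength_anti_left _ (hr.le.trans Ideal.mul_le_left)
  have hI0 : relLength I ⊤ = (H 0 : ℕ∞) := by simpa using hH' 0
  have hadd : ∀ m, relLength (Q ^ (m + 1) * I) (I ^ (m + 2)) + (H (m + 1) : ℕ∞) =
      ((H 0 * (D + 1).multichoose (m + 1) + q * (D + 1 + 1).multichoose m : ℕ) : ℕ∞) := fun m => by
    have h := hrr.relLength_add_relLength (hl.trans_le hQI) m
    rw [hl, hlen, hI0, hq, hH' (m + 1)] at h
    rw [h]
    push_cast
    rfl
  have hfin : ∀ n, ∃ s : ℕ, relLength (Q ^ n * I) (I ^ (n + 1)) = s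
    | 0 => ⟨0, by simp [relLength_eq_zero_iff]⟩
    | m + 1 => ⟨_, (ENat.natCast_toNat (ne_top_of_le_ne_top (ENat.natCast_ne_top _)
        (le_self_add.trans (hadd m).le))).symm⟩
  choose s hs using hfin
  have hrel : ∀ m, s (m + 1) + H (m + 1) =
      H 0 * (D + 1).multichoose (m + 1) + q * (D + 1 + 1).multichoose m := fun m => by
    have h := hadd m
    rw [hs (m + 1)] at h
    exact_mod_cast h
  have hbound : ∀ k, s (r + k) ≤ s r * (D + 1).multichoose k := fun k => by
    have h := relLength_pow_le (l := List.ofFn a) (hl.trans_le hQI) (by rw [hl]; exact hr) k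
    rw [hl, hlen, hs, hs] at h
    exact_mod_cast h
  obtain ⟨hqe, hlim⟩ := tendsto_div_pow_of_hilbert hrel hHS hbound he
  have hs1 : ∀ n, s (n + 1) = (D + 1).multichoose (n + 1) := fun n => by
    have h := hrr.relLength_eq_multichoose (by omega) (hl.trans_le hQI) (hl ▸ hk) (fun a' b' => by
      obtain ⟨n, hn⟩ := exists_lt_multichoose_add hlim a' b'
      refine ⟨n, hn.1, hn.2.1, ?_⟩
      rw [hl, hlen, hs]
      exact_mod_cast hn.2.2) (by rw [hl, hlen, hc']) n
    rw [hl, hlen, hs (n + 1)] at h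
    exact_mod_cast h
  have hmain : ∀ n : ℕ, 1 ≤ n → (H n : ℤ) = e 0 * ((n + (D + 1)).choose (D + 1) : ℤ) -
      e 1 * ((n + (D + 1) - 1).choose (D + 1 - 1) : ℤ) := fun n hn => by
    obtain ⟨m, rfl⟩ : ∃ m, n = m + 1 := ⟨n - 1, by omega⟩
    have h1 := hrel m
    rw [hs1, multichoose_succ_eq_choose, multichoose_succ_eq_choose] at h1
    zify at h1
    have e1 : m + 1 + (D + 1) = (m + 1 + D) + 1 := by omega
    have e2 : m + (D + 1) = m + 1 + D := by omega
    rw [e2] at h1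
    rw [e1, Nat.choose_succ_succ, Nat.add_sub_cancel, Nat.add_sub_cancel, he]
    push_cast
    rw [hqe] at h1
    linear_combination h1
  refine ⟨hmain, fun i hi2 hid => ?_⟩
  have h := eq_zero_of_sum_choose_eq_zero (D + 1) (fun i => if 2 ≤ i then (-1) ^ i * e i else 0)
    (N + 1) (fun n hn => by
      have h1 := hHS n (by omega)
      rw [hmain n (by omega), Finset.sum_range_succ', Finset.sum_range_succ'] at h1
      rw [Finset.sum_range_succ', Finset.sum_range_succ']
      simp at h1 ⊢
      linear_combination -h1) i hid
  simpa [hi2] using h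
end

section
/- Let $A_0$ be a Cohen-Macaulay local ring with maximal ideal $\mathfrak{m}_0$, $I_0$ an $\mathfrak{m}_0$-primary ideal with minimal reduction $Q_0$, and let $A = A_0[[X_1,\dots,X_n]]$ be a formal power series ring with maximal ideal $\mathfrak{m} = \mathfrak{m}_0 A + (X_1,\dots,X_n)$. Put $I = I_0 A + (X_1,\dots,X_n)A$ and $Q = Q_0 A + (X_1,\dots,X_n)A$. Then $Q$ is a reduction of $I$, $e_0(I) = e_0(I_0)$, $e_1(I) = e_1(I_0)$, and $I^2/QI \cong I_0^2/Q_0 I_0$ as modules; in particular $\ell_A(I^2/QI) = \ell_{A_0}(I_0^2/Q_0 I_0)$. -/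
open IsLocalRing

theorem Submodule.nonempty_quotient_equiv_of_ker_eq {R S M N : Type*} [CommRing R] [CommRing S]
    [Algebra R S] [AddCommGroup M] [Module R M] [Module S M] [IsScalarTower R S M]
    [AddCommGroup N] [Module R N] (P : Submodule S M) (f : M →ₗ[R] N)
    (hf : Function.Surjective f) (hker : ∀ x, f x = 0 ↔ x ∈ P) :
    Nonempty ((M ⧸ P) ≃ₗ[R] N) := by
  have h : P.restrictScalars R = LinearMap.ker f := by
    ext x
    simp [hker]
  exact ⟨(Submodule.Quotient.restrictScalarsEquiv R P).symm ≪≫ₗ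
    Submodule.quotEquivOfEq _ _ h ≪≫ₗ f.quotKerEquivOfSurjective hf⟩

/-- If every element of `S` is congruent to an element of `R` modulo the maximal ideal, then
lengths over `S` and over `R` agree. -/
theorem Module.length_restrictScalars_eq {R S : Type*} [CommRing R] [CommRing S] [IsLocalRing S]
    [Algebra R S] (hRS : ∀ s : S, ∃ r : R, s - algebraMap R S r ∈ maximalIdeal S)
    (M : Type*) [AddCommGroup M] [Module S M] [hRM : Module R M] [hT : IsScalarTower R S M] :
    Module.length R M = Module.length S M := by
  refine le_antisymm ?_ ?_
  swap
  · rw [← Module.length_top (R := S), ← Module.length_top (R := R)]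
    exact Submodule.length_le_length_restrictScalars R (⊤ : Submodule S M)
  by_cases h : Module.length S M = ⊤
  · simp [h]
  replace h := Module.length_ne_top_iff.mp h
  revert hRM hT
  induction h with
  | of_subsingleton =>
    intro _ _
    simp [Module.length_eq_zero]
  | @of_simple_quotient M _ _ N hN _ ih =>
    intro _ _
    replace ih := @ih _ _
    have hsimple : IsSimpleModule R (M ⧸ N) := by
      have hann : Module.annihilator S (M ⧸ N) = maximalIdeal S :=
        IsLocalRing.eq_maximalIdeal (IsSimpleModule.annihilator_isMaximal)
      have hsmul (s : S) : ∃ r : R, ∀ x : M ⧸ N, s • x = r • x := by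
        obtain ⟨r, hr⟩ := hRS s
        rw [← hann, Module.mem_annihilator] at hr
        exact ⟨r, fun x ↦ by simpa [sub_smul, sub_eq_zero] using hr x⟩
      have := IsSimpleModule.nontrivial S (M ⧸ N)
      refine isSimpleModule_iff_toSpanSingleton_surjective.mpr ⟨this, fun x hx y ↦ ?_⟩
      obtain ⟨s, rfl⟩ :=
        (isSimpleModule_iff_toSpanSingleton_surjective.mp hN).2 x hx y
      obtain ⟨r, hr⟩ := hsmul s
      exact ⟨r, by simp [hr]⟩
    have hR := Module.length_eq_add_of_exact (N.subtype.restrictScalars R)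
      (N.mkQ.restrictScalars R) N.subtype_injective N.mkQ_surjective
      (LinearMap.exact_subtype_mkQ N)
    have hS := Module.length_eq_add_of_exact N.subtype N.mkQ N.subtype_injective N.mkQ_surjective
      (LinearMap.exact_subtype_mkQ N)
    rw [hR, hS, Module.length_eq_one R (M ⧸ N), Module.length_eq_one S (M ⧸ N)]
    gcongr

namespace MvPowerSeries

variable {σ R : Type*} [CommRing R]

theorem constantCoeff_algebraMap (r : R) :
    constantCoeff (algebraMap R (MvPowerSeries σ R) r) = r := by
  rw [algebraMap_apply, Algebra.algebraMap_self_apply, constantCoeff_C]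

theorem exists_sub_algebraMap_mem_maximalIdeal [IsLocalRing R] (f : MvPowerSeries σ R) :
    ∃ r : R, f - algebraMap R (MvPowerSeries σ R) r ∈ maximalIdeal (MvPowerSeries σ R) := by
  refine ⟨constantCoeff f, ?_⟩
  rw [mem_maximalIdeal, mem_nonunits_iff, isUnit_iff_constantCoeff]
  simp [constantCoeff_algebraMap]

/-- A power series without monomials in the box `{d | ∀ i ∈ s, d i < k}` lies in the ideal
generated by the `X i ^ k` with `i ∈ s`. -/
theorem mem_of_coeff_eq_zero_of_lt [DecidableEq σ] (J : Ideal (MvPowerSeries σ R)) (k : ℕ)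
    (s : Finset σ)
    (hJ : ∀ i ∈ s, X i ^ k ∈ J) (f : MvPowerSeries σ R)
    (hf : ∀ d : σ →₀ ℕ, (∀ i ∈ s, d i < k) → coeff d f = 0) : f ∈ J := by
  induction s using Finset.induction_on generalizing f with
  | empty =>
    have : f = 0 := by
      ext d
      simpa using hf d (by simp)
    simp [this]
  | insert i s _ ih =>
    let g : MvPowerSeries σ R := fun d ↦ if d i < k then 0 else coeff d f
    have hg (d : σ →₀ ℕ) : coeff d g = if d i < k then 0 else coeff d f := rfl
    have hgJ : g ∈ J := by
      have : X i ^ k ∣ g := X_pow_dvd_iff.mpr fun d hd ↦ by simp [hg, hd]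
      exact J.mem_of_dvd this (hJ i (by simp))
    have hfg : f - g ∈ J := by
      refine ih (fun j hj ↦ hJ j (by simp [hj])) _ fun d hd ↦ ?_
      by_cases h : d i < k
      · simp [hg, h, hf d (by simpa [h] using hd)]
      · simp [hg, h]
    simpa using J.add_mem hfg hgJ

/-- The power series whose coefficient at `d` lies in `I₀ ^ (k - |d|)`. -/
noncomputable def powCoeffIdeal (σ : Type*) (I₀ : Ideal R) (k : ℕ) : Ideal (MvPowerSeries σ R) where
  carrier := {f | ∀ d, coeff d f ∈ I₀ ^ (k - d.degree)}
  add_mem' hf hg d := by simpa using add_mem (hf d) (hg d)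
  zero_mem' d := by simp
  smul_mem' f g hg d := by
    classical
    rw [smul_eq_mul, coeff_mul]
    refine Ideal.sum_mem _ fun p hp ↦ Ideal.mul_mem_left _ _ (Ideal.pow_le_pow_right ?_ (hg p.2))
    rw [← Finset.HasAntidiagonal.mem_antidiagonal.mp hp, map_add]
    omega

theorem powCoeffIdeal_mul_le (I₀ : Ideal R) (k l : ℕ) :
    powCoeffIdeal σ I₀ k * powCoeffIdeal σ I₀ l ≤ powCoeffIdeal σ I₀ (k + l) := by
  classical
  refine Ideal.mul_le.mpr fun f hf g hg d ↦ ?_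
  rw [coeff_mul]
  refine Ideal.sum_mem _ fun p hp ↦ Ideal.pow_le_pow_right ?_
    (pow_add I₀ _ _ ▸ Ideal.mul_mem_mul (hf p.1) (hg p.2))
  rw [← Finset.HasAntidiagonal.mem_antidiagonal.mp hp, map_add]
  omega

variable (σ) in
/-- The ideal of `R⟦X⟧` generated by `I₀` and all the variables. -/
noncomputable abbrev extendIdeal (I₀ : Ideal R) : Ideal (MvPowerSeries σ R) :=
  Ideal.map (algebraMap R (MvPowerSeries σ R)) I₀ ⊔
    Ideal.span (Set.range (X : σ → MvPowerSeries σ R))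

theorem extendIdeal_le_powCoeffIdeal (I₀ : Ideal R) :
    extendIdeal σ I₀ ≤ powCoeffIdeal σ I₀ 1 := by
  classical
  refine sup_le (Ideal.map_le_iff_le_comap.mpr fun a ha d ↦ ?_) (Ideal.span_le.mpr ?_)
  · rw [algebraMap_apply, Algebra.algebraMap_self_apply, coeff_C]
    split_ifs with h
    · simpa [h] using ha
    · simp
  · rintro _ ⟨i, rfl⟩ d
    rw [coeff_X]
    split_ifs with h
    · simp [h]
    · simp

theorem extendIdeal_pow_le_powCoeffIdeal (I₀ : Ideal R) (k : ℕ) :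
    extendIdeal σ I₀ ^ k ≤ powCoeffIdeal σ I₀ k := by
  induction k with
  | zero => intro f _ d; simp
  | succ k ih =>
    rw [pow_succ]
    exact (Ideal.mul_mono ih (extendIdeal_le_powCoeffIdeal I₀)).trans (powCoeffIdeal_mul_le I₀ k 1)

theorem monomial_mem_extendIdeal_pow (I₀ : Ideal R) (k : ℕ) (d : σ →₀ ℕ) {a : R}
    (ha : a ∈ I₀ ^ (k - d.degree)) : monomial d a ∈ extendIdeal σ I₀ ^ k := by
  have hX (i : σ) : X i ∈ extendIdeal σ I₀ :=
    Ideal.mem_sup_right (Ideal.subset_span ⟨i, rfl⟩)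
  have hC : (C a : MvPowerSeries σ R) ∈ extendIdeal σ I₀ ^ (k - d.degree) := by
    refine Ideal.pow_right_mono le_sup_left _ ?_
    rw [← Ideal.map_pow]
    exact Ideal.mem_map_of_mem _ ha
  have hmon : monomial d (1 : R) ∈ extendIdeal σ I₀ ^ d.degree := by
    rw [monomial_one_eq, Finsupp.degree_apply, ← Finset.prod_pow_eq_pow_sum]
    exact Ideal.prod_mem_prod fun i _ ↦ Ideal.pow_mem_pow (hX i) _
  have hmul : monomial d a = C a * monomial d (1 : R) := by
    rw [← monomial_zero_eq_C_apply, monomial_mul_monomial, zero_add, mul_one]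
  rw [hmul]
  refine Ideal.pow_le_pow_right (show k ≤ k - d.degree + d.degree by omega) ?_
  rw [pow_add]
  exact Ideal.mul_mem_mul hC hmon

variable {n : ℕ}

/-- The exponent vector of a point of the box `{0, …, k - 1} ^ n`. -/
noncomputable abbrev boxExponent {n k : ℕ} (t : Fin n → Fin k) : Fin n →₀ ℕ :=
  Finsupp.equivFunOnFinite.symm fun i ↦ (t i : ℕ)

theorem boxExponent_injective {n k : ℕ} :
    Function.Injective (boxExponent : (Fin n → Fin k) → (Fin n →₀ ℕ)) := by
  intro t u h
  ext i
  exact DFunLike.congr_fun h i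

theorem degree_boxExponent {n k : ℕ} (t : Fin n → Fin k) :
    (boxExponent t).degree = ∑ i, (t i : ℕ) := by
  simp [Finsupp.degree_eq_sum]

theorem mem_extendIdeal_pow_of_coeff_mem (I₀ : Ideal R) (k : ℕ) (f : MvPowerSeries (Fin n) R)
    (hf : ∀ t : Fin n → Fin k,
      coeff (boxExponent t) f ∈ I₀ ^ (k - ∑ i, (t i : ℕ))) :
    f ∈ extendIdeal (Fin n) I₀ ^ k := by
  classical
  let g : MvPowerSeries (Fin n) R :=
    ∑ t : Fin n → Fin k, monomial (boxExponent t) (coeff (boxExponent t) f)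
  have hg : g ∈ extendIdeal (Fin n) I₀ ^ k := Ideal.sum_mem _ fun t _ ↦
    monomial_mem_extendIdeal_pow I₀ k _ (by rw [degree_boxExponent]; exact hf t)
  have hfg : f - g ∈ extendIdeal (Fin n) I₀ ^ k := by
    refine mem_of_coeff_eq_zero_of_lt _ k Finset.univ (fun i _ ↦ Ideal.pow_mem_pow
      (Ideal.mem_sup_right (Ideal.subset_span (Set.mem_range_self i))) k) _ fun d hd ↦ ?_
    obtain ⟨t, rfl⟩ : ∃ t : Fin n → Fin k, boxExponent t = d :=
      ⟨fun i ↦ ⟨d i, hd i (Finset.mem_univ i)⟩, by ext; simp⟩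
    simp [g, coeff_monomial, boxExponent_injective.eq_iff]
  simpa using add_mem hfg hg

theorem length_quotient_extendIdeal_pow [IsLocalRing R] (I₀ : Ideal R) (k : ℕ) :
    Module.length (MvPowerSeries (Fin n) R)
        (MvPowerSeries (Fin n) R ⧸ extendIdeal (Fin n) I₀ ^ k) =
      ∑ t : Fin n → Fin k, Module.length R (R ⧸ I₀ ^ (k - ∑ i, (t i : ℕ))) := by
  classical
  rw [← Module.length_restrictScalars_eq (R := R) exists_sub_algebraMap_mem_maximalIdeal,
    ← Module.length_pi_of_fintype]
  let φ : MvPowerSeries (Fin n) R →ₗ[R] (t : Fin n → Fin k) → R ⧸ I₀ ^ (k - ∑ i, (t i : ℕ)) :=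
    LinearMap.pi fun t ↦ (I₀ ^ (k - ∑ i, (t i : ℕ))).mkQ ∘ₗ coeff (boxExponent t)
  have hφ (f) (t) : φ f t = Ideal.Quotient.mk _ (coeff (boxExponent t) f) := rfl
  obtain ⟨e⟩ := Submodule.nonempty_quotient_equiv_of_ker_eq (extendIdeal (Fin n) I₀ ^ k) φ
    (fun y ↦ by
      choose r hr using fun t ↦ Ideal.Quotient.mk_surjective (y t)
      refine ⟨∑ t, monomial (boxExponent t) (r t), funext fun t ↦ ?_⟩
      rw [hφ, ← hr]
      simp [coeff_monomial, boxExponent_injective.eq_iff])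
    (fun f ↦ by
      refine ⟨fun h ↦ mem_extendIdeal_pow_of_coeff_mem I₀ k f fun t ↦ ?_, fun h ↦ ?_⟩
      · rw [← Ideal.Quotient.eq_zero_iff_mem, ← hφ, h]
        rfl
      · funext t
        rw [hφ, Pi.zero_apply, Ideal.Quotient.eq_zero_iff_mem, ← degree_boxExponent]
        exact extendIdeal_pow_le_powCoeffIdeal I₀ k h _)
  exact e.length_eq

theorem extendIdeal_pow_succ (I₀ : Ideal R) (k : ℕ) :
    extendIdeal σ I₀ ^ (k + 1) = Ideal.map (algebraMap R (MvPowerSeries σ R)) (I₀ ^ (k + 1)) ⊔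
      Ideal.span (Set.range X) * extendIdeal σ I₀ ^ k := by
  induction k with
  | zero => simp
  | succ k ih =>
    rw [pow_succ' _ (k + 1)]
    nth_rw 1 [extendIdeal]
    rw [Ideal.sup_mul]
    nth_rw 1 [ih]
    rw [Ideal.mul_sup, ← Ideal.map_mul, ← pow_succ', sup_assoc]
    congr 1
    refine sup_eq_right.mpr ?_
    rw [mul_left_comm, pow_succ' _ k]
    exact Ideal.mul_mono_right (Ideal.mul_mono_left le_sup_left)

theorem extendIdeal_isReduction {Q₀ I₀ : Ideal R} (hle : Q₀ ≤ I₀) {r : ℕ}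
    (hr : I₀ ^ (r + 1) = Q₀ * I₀ ^ r) :
    extendIdeal σ I₀ ^ (r + 1) = extendIdeal σ Q₀ * extendIdeal σ I₀ ^ r := by
  refine le_antisymm ?_ ?_
  · rw [extendIdeal_pow_succ, hr, Ideal.map_mul, Ideal.map_pow]
    exact sup_le (Ideal.mul_mono le_sup_left (Ideal.pow_right_mono le_sup_left r))
      (Ideal.mul_mono_left le_sup_right)
  · rw [pow_succ']
    exact Ideal.mul_mono_left (sup_le_sup_right (Ideal.map_mono hle) _)

theorem sub_algebraMap_constantCoeff_mem_span_X [Finite σ] (f : MvPowerSeries σ R) :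
    f - algebraMap R (MvPowerSeries σ R) (constantCoeff f) ∈
      Ideal.span (Set.range (X : σ → MvPowerSeries σ R)) := by
  classical
  have := Fintype.ofFinite σ
  refine mem_of_coeff_eq_zero_of_lt _ 1 Finset.univ (fun i _ ↦ ?_) _ fun d hd ↦ ?_
  · rw [pow_one]
    exact Ideal.subset_span (Set.mem_range_self i)
  · obtain rfl : d = 0 := by
      ext i
      simpa using hd i (Finset.mem_univ i)
    simp [constantCoeff_algebraMap]

/-- An element of `I₀⟦X⟧` differs from its constant term by an element of `(X) I₀⟦X⟧`. -/
theorem sub_algebraMap_constantCoeff_mem_of_mem_map [Finite σ] (J : Ideal R)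
    {f : MvPowerSeries σ R} (hf : f ∈ Ideal.map (algebraMap R (MvPowerSeries σ R)) J) :
    f - algebraMap R (MvPowerSeries σ R) (constantCoeff f) ∈
      Ideal.span (Set.range X) * Ideal.map (algebraMap R (MvPowerSeries σ R)) J := by
  induction hf using Submodule.span_induction with
  | mem x hx =>
    obtain ⟨a, -, rfl⟩ := hx
    simp [constantCoeff_algebraMap]
  | zero => simp
  | add f g _ _ hf hg =>
    simpa only [map_add, add_sub_add_comm] using add_mem hf hg
  | smul s f hf ih =>
    have h1 := Ideal.mul_mem_mul (J := Ideal.map _ J) (sub_algebraMap_constantCoeff_mem_span_X s) hf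
    have h2 := Ideal.mul_mem_left _ (algebraMap R (MvPowerSeries σ R) (constantCoeff s)) ih
    convert add_mem h1 h2 using 1
    rw [smul_eq_mul, map_mul, map_mul]
    ring

theorem constantCoeff_eq_zero_of_mem_span_X {f : MvPowerSeries σ R}
    (hf : f ∈ Ideal.span (Set.range (X : σ → MvPowerSeries σ R))) : constantCoeff f = 0 := by
  have : Ideal.span (Set.range (X : σ → MvPowerSeries σ R)) ≤ RingHom.ker constantCoeff := by
    rw [Ideal.span_le]
    rintro _ ⟨i, rfl⟩
    simp [RingHom.mem_ker]
  exact this hf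

theorem constantCoeff_mem_of_mem_map {J : Ideal R} {f : MvPowerSeries σ R}
    (hf : f ∈ Ideal.map (algebraMap R (MvPowerSeries σ R)) J) : constantCoeff f ∈ J := by
  have : Ideal.map (algebraMap R (MvPowerSeries σ R)) J ≤ J.comap constantCoeff := by
    rw [Ideal.map_le_iff_le_comap]
    intro a ha
    rwa [Ideal.mem_comap, Ideal.mem_comap, constantCoeff_algebraMap]
  exact this hf

theorem constantCoeff_mem_of_mem_extendIdeal {J : Ideal R} {f : MvPowerSeries σ R}
    (hf : f ∈ extendIdeal σ J) : constantCoeff f ∈ J := by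
  obtain ⟨g, hg, h, hh, rfl⟩ := Submodule.mem_sup.mp hf
  rw [map_add, constantCoeff_eq_zero_of_mem_span_X hh, add_zero]
  exact constantCoeff_mem_of_mem_map hg

theorem mem_extendIdeal_mul_iff [Finite σ] {Q₀ I₀ : Ideal R} {f : MvPowerSeries σ R}
    (hf : f ∈ extendIdeal σ I₀ ^ 2) :
    constantCoeff f ∈ Q₀ * I₀ ↔ f ∈ extendIdeal σ Q₀ * extendIdeal σ I₀ := by
  constructor
  · intro h
    have hX : Ideal.span (Set.range X) * extendIdeal σ I₀ ≤
        extendIdeal σ Q₀ * extendIdeal σ I₀ := Ideal.mul_mono_left le_sup_right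
    rw [extendIdeal_pow_succ, pow_one] at hf
    obtain ⟨g, hg, x, hx, rfl⟩ := Submodule.mem_sup.mp hf
    refine add_mem ?_ (hX hx)
    rw [map_add, constantCoeff_eq_zero_of_mem_span_X (Ideal.mul_le_left hx), add_zero] at h
    rw [← sub_add_cancel g (algebraMap R (MvPowerSeries σ R) (constantCoeff g))]
    refine add_mem (hX ?_) ?_
    · refine Ideal.mul_mono_right ?_ (sub_algebraMap_constantCoeff_mem_of_mem_map _ hg)
      exact (Ideal.map_mono (Ideal.pow_le_self two_ne_zero)).trans le_sup_left
    · refine Ideal.mul_mono le_sup_left le_sup_left ?_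
      rw [← Ideal.map_mul]
      exact Ideal.mem_map_of_mem _ h
  · intro h
    refine Submodule.mul_induction_on h (fun g hg k hk ↦ ?_) fun g k hg hk ↦ ?_
    · rw [map_mul]
      exact Ideal.mul_mem_mul (constantCoeff_mem_of_mem_extendIdeal hg)
        (constantCoeff_mem_of_mem_extendIdeal hk)
    · rw [map_add]
      exact add_mem hg hk

theorem constantCoeff_mem_pow_of_mem_extendIdeal_pow {I₀ : Ideal R} {k : ℕ}
    {f : MvPowerSeries σ R} (hf : f ∈ extendIdeal σ I₀ ^ k) : constantCoeff f ∈ I₀ ^ k := by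
  simpa using extendIdeal_pow_le_powCoeffIdeal I₀ k hf 0

theorem nonempty_sq_quotient_equiv [Finite σ] (Q₀ I₀ : Ideal R) :
    Nonempty ((↥(extendIdeal σ I₀ ^ 2) ⧸
        Submodule.comap (extendIdeal σ I₀ ^ 2).subtype (extendIdeal σ Q₀ * extendIdeal σ I₀)) ≃ₗ[R]
      (↥(I₀ ^ 2) ⧸ Submodule.comap (I₀ ^ 2).subtype (Q₀ * I₀))) := by
  let ψ : ↥(extendIdeal σ I₀ ^ 2) →ₗ[R] ↥(I₀ ^ 2) :=
    { toFun f := ⟨constantCoeff f.1, constantCoeff_mem_pow_of_mem_extendIdeal_pow f.2⟩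
      map_add' f g := by ext; simp
      map_smul' r f := by ext; simp }
  refine Submodule.nonempty_quotient_equiv_of_ker_eq _
    ((Submodule.comap (I₀ ^ 2).subtype (Q₀ * I₀)).mkQ ∘ₗ ψ)
    ((Submodule.mkQ_surjective _).comp fun a ↦ ?_) fun f ↦ ?_
  · refine ⟨⟨algebraMap R (MvPowerSeries σ R) a.1, ?_⟩, ?_⟩
    · refine Ideal.pow_right_mono le_sup_left 2 ?_
      rw [← Ideal.map_pow]
      exact Ideal.mem_map_of_mem _ a.2
    · ext
      simp [ψ, constantCoeff_algebraMap]
  · rw [LinearMap.comp_apply, Submodule.mkQ_apply, Submodule.Quotient.mk_eq_zero]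
    exact mem_extendIdeal_mul_iff f.2

end MvPowerSeries

/-- Summing over a box of side `B > K` amounts to iterated summation. -/
theorem Finset.sum_box_eq_iterate (h : ℕ → ℕ) (hh : h 0 = 0) (B n K : ℕ) (hK : K < B) :
    ∑ t : Fin n → Fin B, h (K + 1 - ∑ i, (t i : ℕ)) =
      (fun g k ↦ ∑ j ∈ Finset.range (k + 1), g j)^[n] (fun k ↦ h (k + 1)) K := by
  induction n generalizing K with
  | zero => simp
  | succ n ih =>
    rw [Function.iterate_succ_apply', ← (Fin.consEquiv fun _ : Fin (n + 1) ↦ Fin B).sum_comp,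
      Fintype.sum_prod_type]
    simp only [Fin.consEquiv_apply, Fin.sum_univ_succ, Fin.cons_zero, Fin.cons_succ, ← Nat.sub_sub]
    rw [Fin.sum_univ_eq_sum_range
        (fun j ↦ ∑ t : Fin n → Fin B, h (K + 1 - j - ∑ i, (t i : ℕ))) B,
      ← Finset.sum_range_reflect _ (K + 1)]
    refine (Finset.sum_subset_zero_on_sdiff (Finset.range_subset_range.mpr hK)
      (fun j hj ↦ ?_) fun j hj ↦ ?_).symm
    · have hj : K + 1 - j = 0 := by simp at hj; omega
      simp [hj, hh]
    · have hj : j ≤ K := Finset.mem_range_succ_iff.mp hj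
      rw [Nat.add_sub_cancel, Nat.sub_add_comm hj, ih (K - j) (by omega)]

/-- The value at `m` of the combination `∑ (-1) ^ i * e i * (m + d - i).choose (d - i)`. -/
def hilbertSum (e : ℕ → ℤ) (d m : ℕ) : ℤ :=
  ∑ i ∈ Finset.range (d + 1), (-1) ^ i * e i * ((m + d - i).choose (d - i) : ℤ)

theorem hilbertSum_succ (e : ℕ → ℤ) (d m : ℕ) :
    hilbertSum e (d + 1) (m + 1) = hilbertSum e (d + 1) m + hilbertSum e d (m + 1) := by
  rw [hilbertSum, hilbertSum, Finset.sum_range_succ, Finset.sum_range_succ _ (d + 1), hilbertSum,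
    add_right_comm (∑ i ∈ Finset.range (d + 1), _), ← Finset.sum_add_distrib]
  simp only [Nat.sub_self, Nat.choose_zero_right]
  congr 1
  refine Finset.sum_congr rfl fun i hi ↦ ?_
  obtain ⟨j, rfl⟩ := Nat.exists_eq_add_of_le (Finset.mem_range_succ_iff.mp hi)
  have h1 : m + 1 + (i + j + 1) - i = (m + j + 1) + 1 := by omega
  have h2 : m + (i + j + 1) - i = m + j + 1 := by omega
  have h3 : m + 1 + (i + j) - i = m + j + 1 := by omega
  have h4 : i + j + 1 - i = j + 1 := by omega
  have h5 : i + j - i = j := by omega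
  rw [h1, h2, h3, h4, h5, Nat.choose_succ_succ]
  push_cast
  ring

theorem hilbertSum_congr {e e' : ℕ → ℤ} {d : ℕ} (h : ∀ i ≤ d, e i = e' i) (m : ℕ) :
    hilbertSum e d m = hilbertSum e' d m :=
  Finset.sum_congr rfl fun i hi ↦ by rw [h i (Finset.mem_range_succ_iff.mp hi)]

/-- The coefficients of a Hilbert polynomial are determined by its values at large integers. -/
theorem eq_of_hilbertSum_eq {e e' : ℕ → ℤ} {d N : ℕ}
    (h : ∀ m ≥ N, hilbertSum e d m = hilbertSum e' d m) : ∀ i ≤ d, e i = e' i := by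
  induction d generalizing N with
  | zero =>
    intro i hi
    obtain rfl : i = 0 := by omega
    simpa [hilbertSum] using h N le_rfl
  | succ d ih =>
    have hlow : ∀ i ≤ d, e i = e' i := by
      refine ih (N := N + 1) fun m hm ↦ ?_
      obtain ⟨m, rfl⟩ := Nat.exists_eq_add_of_le' (show 1 ≤ m by omega)
      have h1 := hilbertSum_succ e d m
      have h2 := hilbertSum_succ e' d m
      have h3 := h m (by omega)
      have h4 := h (m + 1) (by omega)
      linarith
    intro i hi
    obtain hi | rfl := Nat.le_succ_iff.mp hi
    · exact hlow i hi
    · have hN := h N le_rfl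
      rw [hilbertSum, hilbertSum, Finset.sum_range_succ, Finset.sum_range_succ _ (d + 1),
        Finset.sum_congr rfl fun i hi ↦ by rw [hlow i (Finset.mem_range_succ_iff.mp hi)]] at hN
      simpa using hN

/-- Iterated summation of a function that is eventually a Hilbert polynomial keeps the leading
coefficients. -/
theorem exists_hilbertSum_iterate (H : ℕ → ℕ) (e : ℕ → ℤ) (d N n : ℕ)
    (h : ∀ m ≥ N, (H m : ℤ) = hilbertSum e d m) :
    ∃ e' : ℕ → ℤ, (∀ i ≤ d, e' i = e i) ∧ ∀ m ≥ N,
      (((fun g k ↦ ∑ j ∈ Finset.range (k + 1), g j)^[n] H m : ℕ) : ℤ) =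
        hilbertSum e' (d + n) m := by
  induction n with
  | zero => exact ⟨e, fun _ _ ↦ rfl, h⟩
  | succ n ih =>
    obtain ⟨e', he', hs⟩ := ih
    set F := (fun (g : ℕ → ℕ) k ↦ ∑ j ∈ Finset.range (k + 1), g j)^[n] H
    let D := d + n
    let c : ℤ := (-1) ^ (D + 1) * ((∑ j ∈ Finset.range (N + 1), F j : ℕ) -
      ∑ i ∈ Finset.range (D + 1), (-1) ^ i * e' i * ((N + (D + 1) - i).choose (D + 1 - i) : ℤ))
    let e'' : ℕ → ℤ := fun i ↦ if i ≤ D then e' i else c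
    refine ⟨e'', fun i hi ↦ by simp [e'', D, he' i hi, show i ≤ d + n by omega], fun m hm ↦ ?_⟩
    rw [Function.iterate_succ_apply', ← add_assoc]
    change ((∑ j ∈ Finset.range (m + 1), F j : ℕ) : ℤ) = hilbertSum e'' (D + 1) m
    have hlow (m) : hilbertSum e'' D m = hilbertSum e' D m :=
      hilbertSum_congr (fun i hi ↦ by simp [e'', hi]) m
    induction m, hm using Nat.le_induction with
    | base =>
      have hsum : ∑ i ∈ Finset.range (D + 1),
          (-1) ^ i * e'' i * ((N + (D + 1) - i).choose (D + 1 - i) : ℤ) =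
          ∑ i ∈ Finset.range (D + 1),
            (-1) ^ i * e' i * ((N + (D + 1) - i).choose (D + 1 - i) : ℤ) :=
        Finset.sum_congr rfl fun i hi ↦ by
          rw [show e'' i = e' i by simp [e'', Finset.mem_range_succ_iff.mp hi]]
      rw [hilbertSum, Finset.sum_range_succ _ (D + 1), hsum]
      have hc : e'' (D + 1) = c := by simp [e'']
      rw [hc, ← mul_assoc, ← pow_add]
      simp [Even.neg_one_pow ⟨D + 1, rfl⟩]
    | succ m hm ihm =>
      rw [Finset.sum_range_succ, Nat.cast_add, ihm, hilbertSum_succ, hlow, hs (m + 1) (by omega)]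

/-- Passing from `(A₀, I₀, Q₀)` to the power series ring
`A = A₀[[X₁,…,X_n]]` with `I = I₀A + (X)A`, `Q = Q₀A + (X)A`:  `Q` is a reduction of
`I`, the first two Hilbert coefficients are unchanged, and `I²/QI ≅ I₀²/Q₀I₀`, so in
particular the lengths agree.  `H₀ n = ℓ_{A₀}(A₀/I₀^{n+1})` and
`H n = ℓ_A(A/I^{n+1})`, with Hilbert coefficients `e⁰`, `e` given by the respective
Hilbert–Samuel polynomials (of dimensions `d₀` and `d₀ + n`). -/
theorem power_series_extension (A₀ : Type*) [CommRing A₀] [IsLocalRing A₀]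
    [IsNoetherianRing A₀] (d₀ : ℕ) (hd₀ : 0 < d₀) (hCM : IsCohenMacaulayLocal A₀ d₀)
    (I₀ Q₀ : Ideal A₀) (hI₀ : IsPrimaryToMax A₀ I₀)
    (c : ℕ) (a : Fin c → A₀) (hQ₀ : Q₀ = Ideal.span (Set.range a)) (hQ₀I₀ : Q₀ ≤ I₀)
    (hred₀ : ∃ r : ℕ, I₀ ^ (r + 1) = Q₀ * I₀ ^ r)
    (n : ℕ)
    (I Q : Ideal (MvPowerSeries (Fin n) A₀))
    (hI : I = Ideal.map (algebraMap A₀ (MvPowerSeries (Fin n) A₀)) I₀ ⊔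
      Ideal.span (Set.range (MvPowerSeries.X : Fin n → MvPowerSeries (Fin n) A₀)))
    (hQ : Q = Ideal.map (algebraMap A₀ (MvPowerSeries (Fin n) A₀)) Q₀ ⊔
      Ideal.span (Set.range (MvPowerSeries.X : Fin n → MvPowerSeries (Fin n) A₀)))
    (H₀ H : ℕ → ℕ)
    (hH₀ : ∀ m : ℕ, moduleLength A₀ (A₀ ⧸ I₀ ^ (m + 1)) = (H₀ m : ℕ∞))
    (hH : ∀ m : ℕ,
      moduleLength (MvPowerSeries (Fin n) A₀)
        (MvPowerSeries (Fin n) A₀ ⧸ I ^ (m + 1)) = (H m : ℕ∞))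
    (e₀ e : ℕ → ℤ) (N : ℕ)
    (hHS₀ : ∀ m ≥ N, (H₀ m : ℤ) =
      ∑ i ∈ Finset.range (d₀ + 1),
        (-1) ^ i * e₀ i * ((m + d₀ - i).choose (d₀ - i) : ℤ))
    (hHS : ∀ m ≥ N, (H m : ℤ) =
      ∑ i ∈ Finset.range (d₀ + n + 1),
        (-1) ^ i * e i * ((m + (d₀ + n) - i).choose (d₀ + n - i) : ℤ)) :
    (∃ r : ℕ, I ^ (r + 1) = Q * I ^ r) ∧
    e 0 = e₀ 0 ∧ e 1 = e₀ 1 ∧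
    Nonempty
      ((RestrictScalars A₀ (MvPowerSeries (Fin n) A₀)
          (↥(I ^ 2) ⧸ Submodule.comap (I ^ 2).subtype (Q * I))) ≃ₗ[A₀]
        (↥(I₀ ^ 2) ⧸ Submodule.comap (I₀ ^ 2).subtype (Q₀ * I₀))) ∧
    moduleLength (MvPowerSeries (Fin n) A₀)
        (↥(I ^ 2) ⧸ Submodule.comap (I ^ 2).subtype (Q * I)) =
      moduleLength A₀ (↥(I₀ ^ 2) ⧸ Submodule.comap (I₀ ^ 2).subtype (Q₀ * I₀)) := by
  subst hI hQ
  obtain ⟨r, hr⟩ := hred₀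
  obtain ⟨f⟩ := MvPowerSeries.nonempty_sq_quotient_equiv (σ := Fin n) Q₀ I₀
  have hH₀' (m : ℕ) : Module.length A₀ (A₀ ⧸ I₀ ^ (m + 1)) = H₀ m :=
    WithBot.coe_injective ((Module.coe_length _ _).trans (hH₀ m))
  have hH' (m : ℕ) : Module.length (MvPowerSeries (Fin n) A₀)
      (MvPowerSeries (Fin n) A₀ ⧸ MvPowerSeries.extendIdeal (Fin n) I₀ ^ (m + 1)) = H m :=
    WithBot.coe_injective ((Module.coe_length _ _).trans (hH m))
  obtain ⟨h, hzero, hsucc⟩ : ∃ h : ℕ → ℕ, h 0 = 0 ∧ ∀ m, h (m + 1) = H₀ m :=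
    ⟨fun k ↦ Nat.casesOn k 0 H₀, rfl, fun _ ↦ rfl⟩
  have hh (k : ℕ) : Module.length A₀ (A₀ ⧸ I₀ ^ k) = h k := by
    cases k with
    | zero =>
      rw [pow_zero, Ideal.one_eq_top]
      simp [hzero, Module.length_eq_zero]
    | succ m => rw [hH₀', hsucc]
  have hiter (m : ℕ) : H m = (fun g k ↦ ∑ j ∈ Finset.range (k + 1), g j)^[n] H₀ m := by
    have hm := MvPowerSeries.length_quotient_extendIdeal_pow (n := n) I₀ (m + 1)
    simp only [hH', hh] at hm
    rw [← Nat.cast_sum, Nat.cast_inj] at hm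
    rw [hm, Finset.sum_box_eq_iterate h hzero _ _ _ m.lt_succ_self, funext hsucc]
  obtain ⟨e', he', hs⟩ := exists_hilbertSum_iterate H₀ e₀ d₀ N n hHS₀
  have hee' : ∀ i ≤ d₀ + n, e i = e' i := eq_of_hilbertSum_eq (N := N) fun m hm ↦ by
    rw [← hs m hm, ← hiter]
    exact (hHS m hm).symm
  refine ⟨⟨r, MvPowerSeries.extendIdeal_isReduction hQ₀I₀ hr⟩, ?_, ?_, ⟨?_⟩, ?_⟩
  · rw [hee' 0 (by omega), he' 0 (by omega)]
  · rw [hee' 1 (by omega), he' 1 (by omega)]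
  · exact { f with
      map_smul' := fun r x ↦
        (congrArg f (algebraMap_smul (MvPowerSeries (Fin n) A₀) r (M := _ ⧸ _) x)).trans
          (f.map_smul r x) }
  · refine (Module.coe_length _ _).symm.trans (Eq.trans ?_ (Module.coe_length _ _))
    rw [← Module.length_restrictScalars_eq (R := A₀)
      MvPowerSeries.exists_sub_algebraMap_mem_maximalIdeal, f.length_eq]
end
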